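/- arXiv:0810.4766 — 2 statements merged into one kernel-verified Lean document; each statement's English description precedes it below -/
import Mathlib

section
/- Let n = 4 and k ≥ 1. Setting Ĥ_{k,2±} = {u ∈ Ĥ_{k,2} : 𝒟(u) = ±(k+1)u}, one has the internal direct sum Ĥ_{k,2} = Ĥ_{k,2+} ⊕ Ĥ_{k,2−}, and each of Ĥ_{k,2+} and Ĥ_{k,2−} is invariant under all the operators L_{r,s} (1 ≤ r < s ≤ 4) with no L_{r,s}-invariant ℝ-subspaces other than {0} and itself. -/
open MvPolynomial

/-- The Laplacian `Δ = ∑ᵣ ∂²_{xᵣ}` on `ℝ[x₁,x₂,x₃,x₄]`. -/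
noncomputable def lap (p : MvPolynomial (Fin 4) ℝ) : MvPolynomial (Fin 4) ℝ :=
  ∑ r : Fin 4, pderiv r (pderiv r p)

/-- `d_{r,s} = x_s∂_{x_r} − x_r∂_{x_s}` (with `Fin 4` indices shifted down by one). -/
noncomputable def dd (r s : Fin 4) (p : MvPolynomial (Fin 4) ℝ) :
    MvPolynomial (Fin 4) ℝ :=
  X s * pderiv r p - X r * pderiv s p

/-- The operator `𝒟` given by the matrix
`[[0, d_{3,4}, d_{4,2}, d_{2,3}], [d_{4,3}, 0, d_{1,4}, d_{3,1}],
  [d_{2,4}, d_{4,1}, 0, d_{1,2}], [d_{3,2}, d_{1,3}, d_{2,1}, 0]]`. -/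
noncomputable def Dop (u : Fin 4 → MvPolynomial (Fin 4) ℝ) :
    Fin 4 → MvPolynomial (Fin 4) ℝ :=
  ![dd 2 3 (u 1) + dd 3 1 (u 2) + dd 1 2 (u 3),
    dd 3 2 (u 0) + dd 0 3 (u 2) + dd 2 0 (u 3),
    dd 1 3 (u 0) + dd 3 0 (u 1) + dd 0 1 (u 3),
    dd 2 1 (u 0) + dd 0 2 (u 1) + dd 1 0 (u 2)]

/-- The set `Ĥ_{k,2}` of tuples of degree-`k` harmonics `(f₁,…,f₄)` with
`∑ᵣ xᵣ fᵣ = 0`. -/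
def Hk2Set (k : ℕ) : Set (Fin 4 → MvPolynomial (Fin 4) ℝ) :=
  {w | (∀ r, (w r).IsHomogeneous k ∧ lap (w r) = 0) ∧ (∑ r : Fin 4, X r * w r) = 0}

/-- `Ĥ_{k,2+} = {u ∈ Ĥ_{k,2} : 𝒟u = (k+1)u}`. -/
def Hk2Plus (k : ℕ) : Set (Fin 4 → MvPolynomial (Fin 4) ℝ) :=
  {u ∈ Hk2Set k | Dop u = ((k : ℝ) + 1) • u}

/-- `Ĥ_{k,2−} = {u ∈ Ĥ_{k,2} : 𝒟u = −(k+1)u}`. -/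
def Hk2Minus (k : ℕ) : Set (Fin 4 → MvPolynomial (Fin 4) ℝ) :=
  {u ∈ Hk2Set k | Dop u = (-((k : ℝ) + 1)) • u}

/-- The `o(4,ℝ)`-action on tuples:
`L_{r,s}(u) = (x_r∂_{x_s} − x_s∂_{x_r})(u) + u_s ς_r − u_r ς_s`. -/
noncomputable def Lop (r s : Fin 4) (u : Fin 4 → MvPolynomial (Fin 4) ℝ) :
    Fin 4 → MvPolynomial (Fin 4) ℝ :=
  fun j => (X r * pderiv s (u j) - X s * pderiv r (u j))
    + (if j = r then u s else 0) - (if j = s then u r else 0)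

/-!
`𝒟` commutes with the `L_{r,s}` and satisfies `𝒟² = (k + 1)²` on `Ĥ_{k,2}`, which gives the
splitting into invariant eigenspaces.

For the irreducibility, pass to coordinates attached to an isotropic basis of `ℂ⁴`. Two of the
complexified rotations then lower a weight that takes finitely many values, so every nonzero
invariant subspace contains, after complexification, a nonzero vector killed by both. The equations
defining the eigenspace determine such a vector up to a scalar, so two nonzero invariant subspaces
are never disjoint. As the `L_{r,s}` are skew for the Fischer inner product, the orthogonal
complement of an invariant subspace in the eigenspace is invariant too, so one of the two vanishes.
-/

section LinearAlgebra

theorem existsUnique_add_mem_inf_eigenspace {K V : Type*} [Field K] [NeZero (2 : K)]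
    [AddCommGroup V] [Module K V] {T : Module.End K V} {N : Submodule K V}
    (hT : ∀ u ∈ N, T u ∈ N) {a : K} (ha : a ≠ 0) (hTT : ∀ u ∈ N, T (T u) = a ^ 2 • u)
    {u : V} (hu : u ∈ N) :
    ∃! p : V × V, p.1 ∈ N ⊓ T.eigenspace a ∧ p.2 ∈ N ⊓ T.eigenspace (-a) ∧ u = p.1 + p.2 := by
  have h2 : (2 : K) ≠ 0 := two_ne_zero
  simp only [Submodule.mem_inf, Module.End.mem_eigenspace_iff]
  refine ⟨((2 * a)⁻¹ • (a • u + T u), (2 * a)⁻¹ • (a • u - T u)), ⟨⟨?_, ?_⟩, ⟨?_, ?_⟩, ?_⟩, ?_⟩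
  · exact N.smul_mem _ (N.add_mem (N.smul_mem _ hu) (hT u hu))
  · simp only [map_smul, map_add, hTT u hu]
    module
  · exact N.smul_mem _ (N.sub_mem (N.smul_mem _ hu) (hT u hu))
  · simp only [map_smul, map_sub, hTT u hu]
    module
  · match_scalars
    · field_simp
      ring
    · field_simp
      ring
  · rintro ⟨p, q⟩ ⟨⟨-, hp⟩, ⟨-, hq⟩, rfl⟩
    simp only [map_add, hp, hq]
    ext1 <;> match_scalars <;> field_simp <;> ring

theorem sup_orthogonal_eq_top {K V : Type*} [Field K] [AddCommGroup V] [Module K V]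
    {B : LinearMap.BilinForm K V} (hB : B.IsSymm) {W : Submodule K V} [FiniteDimensional K W]
    (hW : (B.restrict W).Nondegenerate) : W ⊔ B.orthogonal W = ⊤ := by
  refine Submodule.eq_top_iff'.2 fun u => ?_
  obtain ⟨w, hw⟩ := ((B.restrict W).toDual hW).surjective ((B u).comp W.subtype)
  refine Submodule.mem_sup.2 ⟨w, w.2, u - w, fun x hx => ?_, add_sub_cancel _ _⟩
  have hwx : B w x = B u x := by
    simpa [LinearMap.BilinForm.toDual_def] using LinearMap.congr_fun hw ⟨x, hx⟩
  rw [map_sub, ← hB.eq u x, ← hB.eq (w : V) x, hwx, sub_self]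

theorem exists_ne_zero_forall_apply_eq_zero {ι M : Type*} [Zero M] {f : ι → M → M} {V : Set M}
    (hV : ∀ i, Set.MapsTo (f i) V V) {F : ℕ → Set M} (hF₀ : F 0 ⊆ {0})
    (hF : ∀ i n, Set.MapsTo (f i) (F (n + 1)) (F n)) {n : ℕ} {x : M} (hxV : x ∈ V)
    (hxF : x ∈ F n) (hx : x ≠ 0) : ∃ y ∈ V, y ≠ 0 ∧ ∀ i, f i y = 0 := by
  induction n generalizing x with
  | zero => exact absurd (hF₀ hxF) hx
  | succ n ih =>
    by_cases h : ∀ i, f i x = 0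
    · exact ⟨x, hxV, hx, h⟩
    · obtain ⟨i, hi⟩ := not_forall.1 h
      exact ih (hV i hxV) (hF i n hxF) hi

end LinearAlgebra

section ComplexSpan

variable {V M : Type*} [AddCommGroup V] [Module ℝ V] [AddCommGroup M] [Module ℂ M] [Module ℝ M]
  {ι : V →ₗ[ℝ] M} {W W' : Submodule ℝ V}

/-- The complex span of the image of a real subspace `W` under `ι`. -/
def complexSpan (ι : V →ₗ[ℝ] M) (W : Submodule ℝ V) : Submodule ℂ M :=
  Submodule.span ℂ (W.map ι)

theorem map_mem_complexSpan {a : V} (ha : a ∈ W) : ι a ∈ complexSpan ι W :=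
  Submodule.subset_span ⟨a, ha, rfl⟩

theorem apply_mem_complexSpan {T : M →ₗ[ℂ] M} (hT : ∀ a ∈ W, T (ι a) ∈ complexSpan ι W) {x : M}
    (hx : x ∈ complexSpan ι W) : T x ∈ complexSpan ι W := by
  refine (Submodule.span_le (p := (complexSpan ι W).comap T)).2 ?_ hx
  rintro _ ⟨a, ha, rfl⟩
  exact hT a ha

variable [IsScalarTower ℝ ℂ M]

theorem mem_complexSpan {x : M} :
    x ∈ complexSpan ι W ↔ ∃ a ∈ W, ∃ b ∈ W, ι a + Complex.I • ι b = x := by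
  refine ⟨fun hx => ?_, ?_⟩
  · induction hx using Submodule.span_induction with
    | mem x hx =>
      obtain ⟨a, ha, rfl⟩ := hx
      exact ⟨a, ha, 0, W.zero_mem, by simp⟩
    | zero => exact ⟨0, W.zero_mem, 0, W.zero_mem, by simp⟩
    | add x y _ _ hx hy =>
      obtain ⟨a, ha, b, hb, rfl⟩ := hx
      obtain ⟨a', ha', b', hb', rfl⟩ := hy
      refine ⟨a + a', W.add_mem ha ha', b + b', W.add_mem hb hb', ?_⟩
      simp only [map_add]
      module
    | smul z x _ hx =>
      obtain ⟨a, ha, b, hb, rfl⟩ := hx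
      refine ⟨z.re • a - z.im • b, W.sub_mem (W.smul_mem _ ha) (W.smul_mem _ hb),
        z.re • b + z.im • a, W.add_mem (W.smul_mem _ hb) (W.smul_mem _ ha), ?_⟩
      have hz := Complex.re_add_im z
      simp only [map_sub, map_add, map_smul]
      match_scalars
      · linear_combination hz
      · linear_combination Complex.I * hz - z.im * Complex.I_mul_I
  · rintro ⟨a, ha, b, hb, rfl⟩
    exact add_mem (Submodule.subset_span ⟨a, ha, rfl⟩)
      (Submodule.smul_mem _ _ (Submodule.subset_span ⟨b, hb, rfl⟩))

theorem disjoint_complexSpan (hι : ∀ a b, ι a + Complex.I • ι b = 0 → a = 0 ∧ b = 0)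
    (h : Disjoint W W') : Disjoint (complexSpan ι W) (complexSpan ι W') := by
  rw [Submodule.disjoint_def] at h ⊢
  intro x hx hx'
  obtain ⟨a, ha, b, hb, rfl⟩ := mem_complexSpan.1 hx
  obtain ⟨a', ha', b', hb', he⟩ := mem_complexSpan.1 hx'
  obtain ⟨haa, hbb⟩ := hι (a' - a) (b' - b) <| by
    rw [map_sub, map_sub, smul_sub, sub_add_sub_comm, he, sub_self]
  rw [sub_eq_zero] at haa hbb
  rw [h a ha (haa ▸ ha'), h b hb (hbb ▸ hb')]
  simp

end ComplexSpan

section MvPolynomial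

variable {σ R : Type*}

theorem pderiv_pderiv_comm [CommSemiring R] (i j : σ) (p : MvPolynomial σ R) :
    pderiv i (pderiv j p) = pderiv j (pderiv i p) := by
  ext m
  rcases eq_or_ne i j with rfl | h
  · rfl
  · simp only [coeff_pderiv, Finsupp.add_apply, Finsupp.single_eq_of_ne h,
      Finsupp.single_eq_of_ne h.symm, add_zero]
    rw [mul_right_comm, add_right_comm]

theorem pderiv_X_mul [CommSemiring R] [DecidableEq σ] (i j : σ) (p : MvPolynomial σ R) :
    pderiv i (X j * p) = (if i = j then p else 0) + X j * pderiv i p := by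
  rw [pderiv_mul, pderiv_X, Pi.single_apply]
  split_ifs with h <;> simp_all

theorem map_aeval_eq_sum_pderiv [CommSemiring R] [Fintype σ] {A : Type*} [CommSemiring A]
    [Algebra R A] (D : Derivation R A A) (f : σ → A) (p : MvPolynomial σ R) :
    D (aeval f p) = ∑ i, D (f i) * aeval f (pderiv i p) := by
  classical
  induction p using MvPolynomial.induction_on with
  | C a => simp
  | add p q hp hq => simp [hp, hq, mul_add, Finset.sum_add_distrib]
  | mul_X p n hp =>
    simp only [map_mul, aeval_X, Derivation.leibniz, hp, smul_eq_mul, pderiv_X, Pi.single_apply,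
      apply_ite (aeval f), map_add, map_one, map_zero, mul_add, Finset.sum_add_distrib,
      Finset.mul_sum]
    simp [mul_comm, mul_left_comm]

theorem exists_coeff_ne_zero_of_coeff_X_mul_pderiv [CommSemiring R] {s t : σ}
    {p : MvPolynomial σ R} {m : σ →₀ ℕ} (h : coeff m (X s * pderiv t p) ≠ 0) :
    ∃ m', coeff m' p ≠ 0 ∧ m + Finsupp.single t 1 = m' + Finsupp.single s 1 := by
  classical
  rw [coeff_X_mul', coeff_pderiv, ite_ne_right_iff, Finsupp.mem_support_iff] at h
  refine ⟨_, left_ne_zero_of_mul h.2, ?_⟩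
  rw [add_right_comm, tsub_add_cancel_of_le]
  exact Finsupp.single_le_iff.2 (Nat.one_le_iff_ne_zero.2 h.1)

theorem isHomogeneous_X_mul_pderiv [CommSemiring R] {k : ℕ} {p : MvPolynomial σ R}
    (hp : p.IsHomogeneous k) (s t : σ) : (X s * pderiv t p).IsHomogeneous k := by
  intro m hm
  obtain ⟨m', hm', he⟩ := exists_coeff_ne_zero_of_coeff_X_mul_pderiv hm
  have := congrArg (Finsupp.weight (1 : σ → ℕ)) he
  simpa [hp hm', Finsupp.weight_single] using this

theorem coeff_X_mul_pderiv_self [CommSemiring R] (s : σ) (p : MvPolynomial σ R) (m : σ →₀ ℕ) :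
    coeff m (X s * pderiv s p) = m s * coeff m p := by
  classical
  rw [coeff_X_mul', coeff_pderiv]
  split_ifs with hs
  · have hle : Finsupp.single s 1 ≤ m :=
      Finsupp.single_le_iff.2 (Nat.one_le_iff_ne_zero.2 (Finsupp.mem_support_iff.1 hs))
    rw [tsub_add_cancel_of_le hle, mul_comm]
    congr 1
    have hs' := DFunLike.congr_fun (tsub_add_cancel_of_le hle) s
    rw [Finsupp.add_apply, Finsupp.single_eq_same] at hs'
    exact_mod_cast congrArg (Nat.cast (R := R)) hs'
  · simp [Finsupp.notMem_support_iff.1 hs]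

theorem eq_monomial_of_pderiv_eq_zero [CommSemiring R] [NoZeroDivisors R] [CharZero R] {k : ℕ}
    {p : MvPolynomial σ R} (hp : p.IsHomogeneous k) {i : σ} (hd : ∀ j ≠ i, pderiv j p = 0) :
    p = monomial (Finsupp.single i k) (coeff (Finsupp.single i k) p) := by
  classical
  ext m
  rw [coeff_monomial]
  split_ifs with hm
  · rw [hm]
  by_contra hc
  have hm₀ (j) (hj : j ≠ i) : m j = 0 := by
    have h := coeff_X_mul_pderiv_self j p m
    rw [hd j hj, mul_zero, coeff_zero] at h
    exact_mod_cast (mul_eq_zero.1 h.symm).resolve_right hc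
  have hmi : m = Finsupp.single i (m i) := by
    ext j
    rcases eq_or_ne j i with rfl | hj
    · simp
    · rw [hm₀ j hj, Finsupp.single_eq_of_ne hj]
  have hk : m i = k := by
    have h := hp hc
    rwa [hmi, Finsupp.weight_single, Pi.one_apply, smul_eq_mul, mul_one] at h
  exact hm (hk ▸ hmi.symm)

end MvPolynomial

section Fischer

variable {σ : Type*} [Fintype σ]

/-- The Fischer inner product `⟨p, q⟩ = ∑ₘ m! pₘ qₘ`, for which multiplication by `xᵢ` and `∂ᵢ` are
adjoint to each other. -/
noncomputable def fischer : LinearMap.BilinForm ℝ (MvPolynomial σ ℝ) :=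
  (basisMonomials σ ℝ).constr ℝ fun m => ((∏ i, (m i).factorial : ℕ) : ℝ) • lcoeff ℝ m

theorem fischer_monomial (m : σ →₀ ℕ) (c : ℝ) (q : MvPolynomial σ ℝ) :
    fischer (monomial m c) q = c * ((∏ i, (m i).factorial : ℕ) * coeff m q) := by
  have h : monomial m c = c • basisMonomials σ ℝ m := by
    simp [smul_monomial]
  rw [h, map_smul, fischer, Module.Basis.constr_basis]
  simp

theorem fischer_comm (p q : MvPolynomial σ ℝ) : fischer p q = fischer q p := by
  classical
  induction p using MvPolynomial.induction_on' with
  | add a b ha hb => rw [map_add, map_add, LinearMap.add_apply, ha, hb]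
  | monomial m c =>
    induction q using MvPolynomial.induction_on' with
    | add a b ha hb => rw [map_add, map_add, LinearMap.add_apply, ha, hb]
    | monomial n d =>
      rw [fischer_monomial, fischer_monomial, coeff_monomial, coeff_monomial]
      rcases eq_or_ne m n with rfl | h
      · simp only [if_true]
        ring
      · simp [h, h.symm]

theorem prod_factorial_add_single (m : σ →₀ ℕ) (i : σ) :
    ∏ j, ((m + Finsupp.single i 1 : σ →₀ ℕ) j).factorial = (m i + 1) * ∏ j, (m j).factorial := by
  classical
  rw [← Finset.mul_prod_erase _ _ (Finset.mem_univ i),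
    ← Finset.mul_prod_erase Finset.univ (fun j => (m j).factorial) (Finset.mem_univ i),
    Finsupp.add_apply, Finsupp.single_eq_same, Nat.factorial_succ, mul_assoc]
  congr 2
  refine Finset.prod_congr rfl fun j hj => ?_
  rw [Finsupp.add_apply, Finsupp.single_eq_of_ne (Finset.ne_of_mem_erase hj), add_zero]

theorem fischer_X_mul (i : σ) (p q : MvPolynomial σ ℝ) :
    fischer (X i * p) q = fischer p (pderiv i q) := by
  induction p using MvPolynomial.induction_on' with
  | add a b ha hb => simp only [mul_add, map_add, LinearMap.add_apply, ha, hb]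
  | monomial m c =>
    have h : X i * monomial m c = monomial (m + Finsupp.single i 1) c := by
      rw [mul_comm, X, monomial_mul, mul_one]
    rw [h, fischer_monomial, fischer_monomial, coeff_pderiv, prod_factorial_add_single]
    push_cast
    ring

theorem fischer_pderiv (i : σ) (p q : MvPolynomial σ ℝ) :
    fischer (pderiv i p) q = fischer p (X i * q) := by
  rw [fischer_comm, ← fischer_X_mul, fischer_comm]

theorem fischer_self (p : MvPolynomial σ ℝ) :
    fischer p p = ∑ m ∈ p.support, (∏ i, (m i).factorial : ℕ) * coeff m p ^ 2 := by
  have h : fischer p = ∑ m ∈ p.support, fischer (monomial m (coeff m p)) := by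
    rw [← map_sum, support_sum_monomial_coeff]
  rw [h, LinearMap.sum_apply]
  refine Finset.sum_congr rfl fun m _ => ?_
  rw [fischer_monomial]
  ring

theorem fischer_self_nonneg (p : MvPolynomial σ ℝ) : 0 ≤ fischer p p := by
  rw [fischer_self]
  positivity

theorem fischer_self_eq_zero {p : MvPolynomial σ ℝ} : fischer p p = 0 ↔ p = 0 := by
  refine ⟨fun hp => ?_, fun hp => by rw [hp, map_zero]⟩
  by_contra h
  refine hp.not_gt ?_
  rw [fischer_self]
  refine Finset.sum_pos (fun m hm => ?_) (support_nonempty.2 h)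
  have : 0 < ∏ i, (m i).factorial := Finset.prod_pos fun i _ => Nat.factorial_pos _
  have hc : coeff m p ≠ 0 := mem_support_iff.1 hm
  positivity

end Fischer

/-- Tuples of four polynomials in four variables over `R`, also thought of as polynomial vector
fields. -/
abbrev PolyTuple (R : Type*) [CommSemiring R] := Fin 4 → MvPolynomial (Fin 4) R

section RealOperators

/-- The Laplacian `lap` as a linear map. -/
noncomputable def lapLinear : Module.End ℝ (MvPolynomial (Fin 4) ℝ) :=
  ∑ r, (pderiv r).toLinearMap ∘ₗ (pderiv r).toLinearMap

/-- The operator `d_{r,s}` as a derivation. -/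
noncomputable def ddDerivation (r s : Fin 4) :
    Derivation ℝ (MvPolynomial (Fin 4) ℝ) (MvPolynomial (Fin 4) ℝ) :=
  (X s : MvPolynomial (Fin 4) ℝ) • pderiv r - (X r : MvPolynomial (Fin 4) ℝ) • pderiv s

/-- The Euler operator `∑ᵣ xᵣ∂ᵣ`. -/
noncomputable def eulerOp (p : MvPolynomial (Fin 4) ℝ) : MvPolynomial (Fin 4) ℝ :=
  ∑ r, X r * pderiv r p

/-- The divergence `∑ᵣ ∂ᵣuᵣ` of a polynomial vector field. -/
noncomputable def divergence (u : PolyTuple ℝ) : MvPolynomial (Fin 4) ℝ :=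
  ∑ r, pderiv r (u r)

/-- The radial component `∑ᵣ xᵣuᵣ` of a polynomial vector field. -/
noncomputable def radialLinear : PolyTuple ℝ →ₗ[ℝ] MvPolynomial (Fin 4) ℝ :=
  ∑ r, LinearMap.mulLeft ℝ (X r) ∘ₗ LinearMap.proj r

theorem lapLinear_apply (p : MvPolynomial (Fin 4) ℝ) : lapLinear p = lap p := by
  simp [lapLinear, lap]

theorem radialLinear_apply (u : PolyTuple ℝ) : radialLinear u = ∑ r, X r * u r := by
  simp [radialLinear]

theorem ddDerivation_apply (r s : Fin 4) (p : MvPolynomial (Fin 4) ℝ) :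
    ddDerivation r s p = dd r s p :=
  rfl

theorem lap_pderiv (r : Fin 4) (p : MvPolynomial (Fin 4) ℝ) :
    lap (pderiv r p) = pderiv r (lap p) := by
  simp only [lap, map_sum, pderiv_pderiv_comm _ r]

theorem lap_X_mul (r : Fin 4) (p : MvPolynomial (Fin 4) ℝ) :
    lap (X r * p) = 2 * pderiv r p + X r * lap p := by
  simp only [lap, pderiv_X_mul, map_add, apply_ite (pderiv _), map_zero, Finset.sum_add_distrib,
    Finset.sum_ite_eq', Finset.mem_univ, if_true, Finset.mul_sum]
  ring

theorem lap_dd (r s : Fin 4) (p : MvPolynomial (Fin 4) ℝ) : lap (dd r s p) = dd r s (lap p) := by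
  rw [dd, ← lapLinear_apply, map_sub, lapLinear_apply, lapLinear_apply, lap_X_mul, lap_X_mul,
    lap_pderiv, lap_pderiv, pderiv_pderiv_comm r s, dd]
  ring

theorem isHomogeneous_dd {k : ℕ} (r s : Fin 4) {p : MvPolynomial (Fin 4) ℝ}
    (hp : p.IsHomogeneous k) : (dd r s p).IsHomogeneous k :=
  (isHomogeneous_X_mul_pderiv hp s r).sub (isHomogeneous_X_mul_pderiv hp r s)

theorem lap_radial (u : PolyTuple ℝ) :
    lap (∑ r, X r * u r) = 2 * divergence u + ∑ r, X r * lap (u r) := by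
  rw [← lapLinear_apply, map_sum]
  simp only [lapLinear_apply, lap_X_mul, Finset.sum_add_distrib, divergence, Finset.mul_sum]

/-- The operator `𝒟` as a linear map. -/
noncomputable def DopLinear : Module.End ℝ (PolyTuple ℝ) where
  toFun := Dop
  map_add' u v := by
    funext j
    fin_cases j <;>
    · simp only [Dop, ← ddDerivation_apply, Pi.add_apply, map_add, Matrix.cons_val, Fin.isValue,
        Fin.zero_eta, Fin.mk_one, Fin.reduceFinMk]
      abel
  map_smul' c u := by
    funext j
    fin_cases j <;> simp [Dop, ← ddDerivation_apply]

theorem DopLinear_apply (u : PolyTuple ℝ) : DopLinear u = Dop u :=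
  rfl

theorem Lop_apply (r s : Fin 4) (u : PolyTuple ℝ) (j : Fin 4) :
    Lop r s u j = dd s r (u j) + ((if j = r then u s else 0) - if j = s then u r else 0) := by
  rw [Lop, dd, add_sub_assoc]

theorem Lop_smul (r s : Fin 4) (c : ℝ) (u : PolyTuple ℝ) : Lop r s (c • u) = c • Lop r s u := by
  funext j
  simp only [Lop_apply, ← ddDerivation_apply, Pi.smul_apply, Derivation.map_smul, smul_add,
    smul_sub, smul_ite, smul_zero]

theorem radial_Lop (r s : Fin 4) (u : PolyTuple ℝ) :
    ∑ j, X j * Lop r s u j = dd s r (∑ j, X j * u j) := by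
  simp only [Lop, dd, map_sum, pderiv_X_mul, mul_add, mul_sub, Finset.sum_add_distrib,
    Finset.sum_sub_distrib, mul_ite, mul_zero, Finset.sum_ite_eq, Finset.sum_ite_eq',
    Finset.mem_univ, if_true, Finset.mul_sum, mul_left_comm (X _) (X _)]
  ring

theorem radial_Dop (u : PolyTuple ℝ) : ∑ r, X r * Dop u r = 0 := by
  simp only [Fin.sum_univ_four, Dop, dd, Matrix.cons_val]
  ring

theorem Dop_Dop_apply (u : PolyTuple ℝ) (r : Fin 4) :
    Dop (Dop u) r = eulerOp (eulerOp (u r)) + 2 * eulerOp (u r) + u r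
      - pderiv r (eulerOp (∑ s, X s * u s)) + X r * lap (∑ s, X s * u s)
      + (∑ s, X s ^ 2) * (pderiv r (divergence u) - lap (u r))
      - X r * (eulerOp (divergence u) + 2 * divergence u) := by
  obtain rfl | rfl | rfl | rfl : r = 0 ∨ r = 1 ∨ r = 2 ∨ r = 3 := by omega
  all_goals
    simp only [Dop, dd, eulerOp, lap, divergence, Fin.sum_univ_four, pderiv_X_mul,
      pderiv_pderiv_comm _ _ (u _), map_add, map_sub, Matrix.cons_val, Fin.isValue,
      Fin.reduceEq, if_true, if_false, map_zero]
    ring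

theorem Lop_self (r : Fin 4) (u : PolyTuple ℝ) : Lop r r u = 0 := by
  funext j
  simp [Lop]

theorem Lop_swap (r s : Fin 4) (u : PolyTuple ℝ) : Lop s r u = -Lop r s u := by
  funext j
  rw [Pi.neg_apply, Lop, Lop]
  ring

set_option maxHeartbeats 1000000 in
-- 24 cases, each a `ring` identity between second derivatives
theorem Dop_Lop_of_lt {r s : Fin 4} (h : r < s) (u : PolyTuple ℝ) :
    Dop (Lop r s u) = Lop r s (Dop u) := by
  have hrs : (r = 0 ∧ (s = 1 ∨ s = 2 ∨ s = 3)) ∨ (r = 1 ∧ (s = 2 ∨ s = 3)) ∨ r = 2 ∧ s = 3 := by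
    omega
  funext j
  obtain rfl | rfl | rfl | rfl : j = 0 ∨ j = 1 ∨ j = 2 ∨ j = 3 := by omega
  all_goals
    rcases hrs with ⟨rfl, rfl | rfl | rfl⟩ | ⟨rfl, rfl | rfl⟩ | ⟨rfl, rfl⟩
    all_goals
      simp only [Dop, Lop, dd, pderiv_X_mul, pderiv_pderiv_comm _ _ (u _), map_add, map_sub,
        Matrix.cons_val, Fin.isValue, Fin.reduceEq, if_true, if_false, add_zero, sub_zero,
        zero_add]
      ring

theorem Dop_Lop (r s : Fin 4) (u : PolyTuple ℝ) : Dop (Lop r s u) = Lop r s (Dop u) := by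
  rcases lt_trichotomy r s with h | rfl | h
  · exact Dop_Lop_of_lt h u
  · rw [Lop_self, Lop_self, ← DopLinear_apply, map_zero]
  · rw [Lop_swap s r, Lop_swap s r, ← Dop_Lop_of_lt h, ← DopLinear_apply, map_neg, DopLinear_apply]

end RealOperators

section RealSide

/-- The space `Hₖ` of harmonic homogeneous polynomials of degree `k`. -/
noncomputable def harmonicSubmodule (k : ℕ) : Submodule ℝ (MvPolynomial (Fin 4) ℝ) :=
  homogeneousSubmodule (Fin 4) ℝ k ⊓ LinearMap.ker lapLinear

/-- The space `Ĥ_{k,2}` as a submodule. -/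
noncomputable def Hk2 (k : ℕ) : Submodule ℝ (PolyTuple ℝ) :=
  Submodule.pi Set.univ (fun _ => harmonicSubmodule k) ⊓ LinearMap.ker radialLinear

/-- The eigenspace of `𝒟` on `Ĥ_{k,2}` for the eigenvalue `c`. -/
noncomputable def Hk2Eigen (k : ℕ) (c : ℝ) : Submodule ℝ (PolyTuple ℝ) :=
  Hk2 k ⊓ DopLinear.eigenspace c

theorem mem_harmonicSubmodule {k : ℕ} {p : MvPolynomial (Fin 4) ℝ} :
    p ∈ harmonicSubmodule k ↔ p.IsHomogeneous k ∧ lap p = 0 := by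
  rw [harmonicSubmodule, Submodule.mem_inf, mem_homogeneousSubmodule, LinearMap.mem_ker,
    lapLinear_apply]

theorem mem_Hk2 {k : ℕ} {u : PolyTuple ℝ} :
    u ∈ Hk2 k ↔ (∀ r, u r ∈ harmonicSubmodule k) ∧ ∑ r, X r * u r = 0 := by
  simp [Hk2, radialLinear_apply]

theorem mem_Hk2_iff_mem_Hk2Set {k : ℕ} {u : PolyTuple ℝ} : u ∈ Hk2 k ↔ u ∈ Hk2Set k := by
  simp only [mem_Hk2, mem_harmonicSubmodule, Hk2Set, Set.mem_ofPred_eq]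

theorem mem_Hk2Eigen {k : ℕ} {c : ℝ} {u : PolyTuple ℝ} :
    u ∈ Hk2Eigen k c ↔ u ∈ Hk2Set k ∧ Dop u = c • u := by
  rw [Hk2Eigen, Submodule.mem_inf, mem_Hk2_iff_mem_Hk2Set,
    Module.End.mem_eigenspace_iff, DopLinear_apply]

theorem coe_Hk2Eigen_plus (k : ℕ) : (Hk2Eigen k (k + 1) : Set (PolyTuple ℝ)) = Hk2Plus k :=
  Set.ext fun _ => mem_Hk2Eigen

theorem coe_Hk2Eigen_minus (k : ℕ) : (Hk2Eigen k (-(k + 1)) : Set (PolyTuple ℝ)) = Hk2Minus k :=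
  Set.ext fun _ => mem_Hk2Eigen

variable {k : ℕ} {u : PolyTuple ℝ}

instance finiteDimensional_Hk2Eigen (k : ℕ) (c : ℝ) : FiniteDimensional ℝ (Hk2Eigen k c) := by
  have : Module.Finite ℝ (Submodule.pi Set.univ fun _ : Fin 4 =>
      homogeneousSubmodule (Fin 4) ℝ k) :=
    Module.Finite.iff_fg.2 (Submodule.fg_pi fun _ => homogeneousSubmodule_fg _ _ k)
  refine Submodule.finiteDimensional_of_le (S₂ := Submodule.pi Set.univ fun _ : Fin 4 =>
    homogeneousSubmodule (Fin 4) ℝ k) fun u hu r _ => ?_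
  exact (mem_harmonicSubmodule.1 ((mem_Hk2.1 hu.1).1 r)).1

theorem divergence_eq_zero (hu : u ∈ Hk2Set k) : divergence u = 0 := by
  have h := lap_radial u
  simp only [hu.2, fun r => (hu.1 r).2, mul_zero, Finset.sum_const_zero, add_zero,
    ← lapLinear_apply, map_zero] at h
  simpa using h.symm

theorem Dop_Dop (hu : u ∈ Hk2Set k) : Dop (Dop u) = ((k : ℝ) + 1) ^ 2 • u := by
  have hE (r) : eulerOp (u r) = (k : ℝ) • u r := by
    rw [eulerOp, (hu.1 r).1.sum_X_mul_pderiv, Nat.cast_smul_eq_nsmul]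
  have hE_smul (c : ℝ) (p) : eulerOp (c • p) = c • eulerOp p := by
    simp only [eulerOp, Derivation.map_smul, mul_smul_comm, Finset.smul_sum]
  funext r
  rw [Dop_Dop_apply, hE, hE_smul, hE, hu.2, divergence_eq_zero hu, (hu.1 r).2]
  simp only [eulerOp, lap, map_zero, mul_zero, Finset.sum_const_zero, add_zero, sub_zero,
    Pi.smul_apply, two_mul]
  module

theorem dd_mem_harmonicSubmodule {p : MvPolynomial (Fin 4) ℝ} (hp : p ∈ harmonicSubmodule k)
    (r s : Fin 4) : dd r s p ∈ harmonicSubmodule k := by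
  rw [mem_harmonicSubmodule] at hp ⊢
  refine ⟨isHomogeneous_dd r s hp.1, ?_⟩
  rw [lap_dd, hp.2, ← ddDerivation_apply, map_zero]

theorem Dop_mem_Hk2 (hu : u ∈ Hk2 k) : Dop u ∈ Hk2 k := by
  rw [mem_Hk2] at hu ⊢
  have hdd (r s t) : dd r s (u t) ∈ harmonicSubmodule k := dd_mem_harmonicSubmodule (hu.1 t) r s
  refine ⟨fun r => ?_, radial_Dop u⟩
  fin_cases r <;> exact add_mem (add_mem (hdd _ _ _) (hdd _ _ _)) (hdd _ _ _)

theorem Lop_mem_Hk2 (hu : u ∈ Hk2 k) (r s : Fin 4) : Lop r s u ∈ Hk2 k := by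
  rw [mem_Hk2] at hu ⊢
  have hite (P : Prop) [Decidable P] (t) : (if P then u t else 0) ∈ harmonicSubmodule k := by
    split_ifs
    exacts [hu.1 t, zero_mem _]
  refine ⟨fun j => ?_, ?_⟩
  · rw [Lop_apply]
    exact add_mem (dd_mem_harmonicSubmodule (hu.1 j) s r) (sub_mem (hite _ s) (hite _ r))
  · rw [radial_Lop, hu.2, ← ddDerivation_apply, map_zero]

theorem Lop_mem_Hk2Eigen {c : ℝ} (hu : u ∈ Hk2Eigen k c) (r s : Fin 4) :
    Lop r s u ∈ Hk2Eigen k c := by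
  refine Submodule.mem_inf.2 ⟨Lop_mem_Hk2 hu.1 r s, ?_⟩
  rw [Module.End.mem_eigenspace_iff, DopLinear_apply, Dop_Lop, (mem_Hk2Eigen.1 hu).2, Lop_smul]

/-- The Fischer inner product on tuples. -/
noncomputable def tupleForm : LinearMap.BilinForm ℝ (PolyTuple ℝ) :=
  ∑ j, fischer.compl₁₂ (LinearMap.proj j) (LinearMap.proj j)

theorem tupleForm_apply (u v : PolyTuple ℝ) : tupleForm u v = ∑ j, fischer (u j) (v j) := by
  simp [tupleForm, LinearMap.sum_apply]

theorem isSymm_tupleForm : tupleForm.IsSymm :=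
  ⟨fun u v => by simp only [tupleForm_apply, fischer_comm]⟩

theorem tupleForm_self_eq_zero {u : PolyTuple ℝ} : tupleForm u u = 0 ↔ u = 0 := by
  rw [tupleForm_apply, Finset.sum_eq_zero_iff_of_nonneg fun j _ => fischer_self_nonneg _]
  simp [fischer_self_eq_zero, funext_iff]

theorem nondegenerate_restrict_tupleForm (W : Submodule ℝ (PolyTuple ℝ)) :
    (tupleForm.restrict W).Nondegenerate := by
  constructor <;>
  · intro x hx
    exact Subtype.ext (tupleForm_self_eq_zero.1 (hx x))

theorem fischer_dd (r s : Fin 4) (p q : MvPolynomial (Fin 4) ℝ) :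
    fischer (dd r s p) q = -fischer p (dd r s q) := by
  simp only [dd, map_sub, LinearMap.sub_apply, fischer_X_mul, ← fischer_pderiv]
  ring

theorem tupleForm_Lop (r s : Fin 4) (u v : PolyTuple ℝ) :
    tupleForm (Lop r s u) v = -tupleForm u (Lop r s v) := by
  have h₁ (a b : Fin 4) : ∑ j, fischer (if j = a then u b else 0) (v j) = fischer (u b) (v a) := by
    rw [Finset.sum_eq_single a (fun j _ hj => by simp [hj]) (by simp), if_pos rfl]
  have h₂ (a b : Fin 4) : ∑ j, fischer (u j) (if j = a then v b else 0) = fischer (u a) (v b) := by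
    rw [Finset.sum_eq_single a (fun j _ hj => by simp [hj]) (by simp), if_pos rfl]
  simp only [tupleForm_apply, Lop_apply, map_add, map_sub, LinearMap.add_apply,
    LinearMap.sub_apply, fischer_dd, Finset.sum_add_distrib, Finset.sum_sub_distrib,
    Finset.sum_neg_distrib, h₁, h₂]
  ring

end RealSide

section IsotropicFrame

/-- The rows of this matrix form the isotropic frame `e₁ + i e₂, e₁ − i e₂, e₃ + i e₄, e₃ − i e₄` of
`ℂ⁴`. -/
noncomputable def frame : Matrix (Fin 4) (Fin 4) ℂ :=
  !![1, Complex.I, 0, 0; 1, -Complex.I, 0, 0; 0, 0, 1, Complex.I; 0, 0, 1, -Complex.I]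

/-- The index of the complex conjugate of a vector of the isotropic frame; it is also the only frame
vector not orthogonal to it. -/
def conjIdx : Fin 4 → Fin 4 :=
  ![1, 0, 3, 2]

/-- The substitution expressing real polynomials in the coordinates attached to the isotropic
frame. -/
noncomputable def isotropic : MvPolynomial (Fin 4) ℝ →ₐ[ℝ] MvPolynomial (Fin 4) ℂ :=
  aeval fun r => ∑ a, C (frame a r) * X (conjIdx a)

/-- The components of a real polynomial vector field with respect to the isotropic frame, as
polynomials in the isotropic coordinates. -/
noncomputable def isotropicTuple : PolyTuple ℝ →ₗ[ℝ] PolyTuple ℂ :=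
  LinearMap.pi fun a =>
    ∑ r, LinearMap.mulLeft ℝ (C (frame a r)) ∘ₗ isotropic.toLinearMap ∘ₗ LinearMap.proj r

theorem conjIdx_conjIdx (a : Fin 4) : conjIdx (conjIdx a) = a := by
  decide +revert

theorem sum_frame_mul_frame (a b : Fin 4) :
    ∑ r, frame a r * frame b r = if b = conjIdx a then 2 else 0 := by
  fin_cases a <;> fin_cases b <;> simp [frame, conjIdx, Fin.sum_univ_four] <;> norm_num

theorem sum_frame_mul_frame_conjIdx (r s : Fin 4) :
    ∑ a, frame a r * frame (conjIdx a) s = if r = s then 2 else 0 := by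
  fin_cases r <;> fin_cases s <;> simp [frame, conjIdx, Fin.sum_univ_four] <;> norm_num

theorem isotropicTuple_apply (u : PolyTuple ℝ) (a : Fin 4) :
    isotropicTuple u a = ∑ r, C (frame a r) * isotropic (u r) := by
  simp [isotropicTuple]

theorem isotropic_X (r : Fin 4) : isotropic (X r) = ∑ a, C (frame a r) * X (conjIdx a) :=
  aeval_X _ r

theorem sum_frame_mul_isotropic_X (a : Fin 4) :
    ∑ r, C (frame a r) * isotropic (X r) = 2 * X a := by
  simp only [isotropic_X, Finset.mul_sum, ← mul_assoc, ← C_mul]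
  rw [Finset.sum_comm]
  simp only [← Finset.sum_mul, ← map_sum, sum_frame_mul_frame, apply_ite C, ite_mul, map_zero,
    zero_mul, Finset.sum_ite_eq', Finset.mem_univ, if_true, conjIdx_conjIdx, map_ofNat]

theorem pderiv_isotropic (b : Fin 4) (p : MvPolynomial (Fin 4) ℝ) :
    pderiv b (isotropic p) = ∑ r, C (frame (conjIdx b) r) * isotropic (pderiv r p) := by
  have hX (a) : (pderiv b (X (conjIdx a)) : MvPolynomial (Fin 4) ℂ)
      = if a = conjIdx b then 1 else 0 := by
    rw [pderiv_X, Pi.single_apply]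
    congr 1
    simp only [eq_iff_iff]
    decide +revert
  have h := map_aeval_eq_sum_pderiv ((pderiv b).restrictScalars ℝ)
    (fun r => ∑ a, C (frame a r) * X (conjIdx a)) p
  simpa [hX, isotropic] using h

theorem isHomogeneous_isotropic {k : ℕ} {p : MvPolynomial (Fin 4) ℝ} (hp : p.IsHomogeneous k) :
    (isotropic p).IsHomogeneous k := by
  rw [← one_mul k]
  exact hp.aeval _ fun r => IsHomogeneous.sum _ _ _ fun a _ => isHomogeneous_C_mul_X _ _

theorem isotropic_radial (u : PolyTuple ℝ) :
    isotropic (∑ r, X r * u r) = ∑ a, X (conjIdx a) * isotropicTuple u a := by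
  simp only [map_sum, map_mul, isotropic_X, isotropicTuple_apply, Finset.sum_mul, Finset.mul_sum]
  rw [Finset.sum_comm]
  simp only [mul_left_comm, mul_assoc]

theorem sum_frame_mul_sum_frame_conjIdx_mul (r : Fin 4) (f : Fin 4 → MvPolynomial (Fin 4) ℂ) :
    ∑ a, C (frame a r) * ∑ s, C (frame (conjIdx a) s) * f s = 2 * f r := by
  simp only [Finset.mul_sum, ← mul_assoc, ← C_mul]
  rw [Finset.sum_comm]
  simp only [← Finset.sum_mul, ← map_sum, sum_frame_mul_frame_conjIdx, apply_ite C, ite_mul,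
    map_zero, zero_mul, Finset.sum_ite_eq, Finset.mem_univ, if_true, map_ofNat]

theorem sum_pderiv_isotropicTuple (u : PolyTuple ℝ) :
    ∑ a, pderiv a (isotropicTuple u a) = 2 * isotropic (divergence u) := by
  simp only [isotropicTuple_apply, map_sum, pderiv_C_mul, pderiv_isotropic]
  rw [Finset.sum_comm]
  simp only [sum_frame_mul_sum_frame_conjIdx_mul, divergence, map_sum]
  rw [Finset.mul_sum]

theorem sum_pderiv_pderiv_isotropic (p : MvPolynomial (Fin 4) ℝ) :
    ∑ a, pderiv a (pderiv (conjIdx a) (isotropic p)) = 2 * isotropic (lap p) := by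
  have h := sum_pderiv_isotropicTuple fun r => pderiv r p
  simp only [isotropicTuple_apply, divergence] at h
  simpa only [pderiv_isotropic, conjIdx_conjIdx, lap] using h

/-- The substitution inverse to `isotropic` over `ℂ`. -/
noncomputable def isotropicInv : MvPolynomial (Fin 4) ℂ →ₐ[ℂ] MvPolynomial (Fin 4) ℂ :=
  aeval fun a => C 2⁻¹ * ∑ r, C (frame a r) * X r

theorem isotropicInv_isotropic (p : MvPolynomial (Fin 4) ℝ) :
    isotropicInv (isotropic p) = map Complex.ofRealHom p := by
  have h : (isotropicInv.restrictScalars ℝ).comp isotropic = mapAlgHom Complex.ofRealAm := by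
    refine algHom_ext fun r => ?_
    have h2 : (C 2⁻¹ * 2 : MvPolynomial (Fin 4) ℂ) = 1 := by
      rw [← map_ofNat C, ← C_mul, inv_mul_cancel₀ two_ne_zero, C_1]
    have hX : isotropicInv (isotropic (X r)) = X r := by
      simp only [isotropic_X, isotropicInv, map_sum, map_mul, aeval_X, algHom_C, algebraMap_eq,
        mul_left_comm (C (frame _ r)) (C 2⁻¹), ← Finset.mul_sum,
        sum_frame_mul_sum_frame_conjIdx_mul]
      rw [← mul_assoc, h2, one_mul]
    simpa using hX
  exact DFunLike.congr_fun h p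

theorem eq_zero_of_isotropic_add_I_smul {p q : MvPolynomial (Fin 4) ℝ}
    (h : isotropic p + Complex.I • isotropic q = 0) : p = 0 ∧ q = 0 := by
  have h' := congrArg isotropicInv h
  rw [map_add, map_smul, isotropicInv_isotropic, isotropicInv_isotropic, map_zero] at h'
  simp only [MvPolynomial.ext_iff, ← forall_and, coeff_zero]
  intro m
  have hm := congrArg (coeff m) h'
  simpa [coeff_map, Complex.ext_iff] using hm

theorem sum_frame_mul_isotropicTuple_conjIdx (u : PolyTuple ℝ) (r : Fin 4) :
    ∑ a, C (frame a r) * isotropicTuple u (conjIdx a) = 2 * isotropic (u r) := by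
  simp only [isotropicTuple_apply, sum_frame_mul_sum_frame_conjIdx_mul]

theorem eq_zero_of_isotropicTuple_add_I_smul (u v : PolyTuple ℝ)
    (h : isotropicTuple u + Complex.I • isotropicTuple v = 0) : u = 0 ∧ v = 0 := by
  have hr (r : Fin 4) : u r = 0 ∧ v r = 0 := by
    refine eq_zero_of_isotropic_add_I_smul ?_
    have hsum : ∑ a, C (frame a r) * (isotropicTuple u + Complex.I • isotropicTuple v) (conjIdx a)
        = 2 * (isotropic (u r) + Complex.I • isotropic (v r)) := by
      simp only [Pi.add_apply, Pi.smul_apply, mul_add, mul_smul_comm, Finset.sum_add_distrib,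
        ← Finset.smul_sum, sum_frame_mul_isotropicTuple_conjIdx]
    rw [h] at hsum
    simpa using hsum
  exact ⟨_root_.funext fun r => (hr r).1, _root_.funext fun r => (hr r).2⟩

end IsotropicFrame

section IsotropicOperators

/-- The generator `X_a ∂_{b̄} − X_b ∂_{ā}` of the rotations in isotropic coordinates. -/
noncomputable def isoRot (a b : Fin 4) :
    Derivation ℂ (MvPolynomial (Fin 4) ℂ) (MvPolynomial (Fin 4) ℂ) :=
  (X a : MvPolynomial (Fin 4) ℂ) • pderiv (conjIdx b)
    - (X b : MvPolynomial (Fin 4) ℂ) • pderiv (conjIdx a)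

/-- The generators of the action of `o(4,ℂ)` on tuples of isotropic components. -/
noncomputable def isoLop (a b : Fin 4) : Module.End ℂ (PolyTuple ℂ) :=
  (isoRot a b).toLinearMap.compLeft (Fin 4)
    + LinearMap.single ℂ (fun _ => MvPolynomial (Fin 4) ℂ) (conjIdx a) ∘ₗ LinearMap.proj b
    - LinearMap.single ℂ (fun _ => MvPolynomial (Fin 4) ℂ) (conjIdx b) ∘ₗ LinearMap.proj a

theorem isoRot_apply (a b : Fin 4) (p : MvPolynomial (Fin 4) ℂ) :
    isoRot a b p = X a * pderiv (conjIdx b) p - X b * pderiv (conjIdx a) p :=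
  rfl

theorem isoLop_apply (a b : Fin 4) (U : PolyTuple ℂ) (j : Fin 4) :
    isoLop a b U j = isoRot a b (U j) + (if j = conjIdx a then U b else 0)
      - (if j = conjIdx b then U a else 0) := by
  simp [isoLop, Pi.single_apply]

theorem two_mul_isoRot_isotropic (a b : Fin 4) (p : MvPolynomial (Fin 4) ℝ) :
    2 * isoRot a b (isotropic p)
      = ∑ r, ∑ s, C (frame a r * frame b s) * isotropic (dd s r p) := by
  have hX (a b : Fin 4) : 2 * (X a * pderiv (conjIdx b) (isotropic p))
      = ∑ r, ∑ s, C (frame a r * frame b s) * isotropic (X r * pderiv s p) := by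
    rw [← mul_assoc, ← sum_frame_mul_isotropic_X, pderiv_isotropic, conjIdx_conjIdx,
      Finset.sum_mul_sum]
    simp only [map_mul, mul_mul_mul_comm]
  rw [isoRot_apply, mul_sub, hX, hX, Finset.sum_comm (f := fun r s => C (frame b r * _) * _),
    ← Finset.sum_sub_distrib]
  simp only [dd, map_sub, mul_sub, Finset.sum_sub_distrib, mul_comm (frame b _)]

theorem sum_frame_mul_frame_mul_isotropic (a b j : Fin 4) (u : PolyTuple ℝ) :
    ∑ r, ∑ s, C (frame a r * frame b s) * (C (frame j r) * isotropic (u s))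
      = 2 * if j = conjIdx a then isotropicTuple u b else 0 := by
  have h : ∑ r, C (frame a r) * C (frame j r)
      = (if j = conjIdx a then 2 else 0 : MvPolynomial (Fin 4) ℂ) := by
    simp only [← C_mul, ← map_sum, sum_frame_mul_frame, apply_ite C, map_ofNat, map_zero]
  rw [mul_ite, mul_zero, ← ite_zero_mul, ← h, isotropicTuple_apply, Finset.sum_mul_sum]
  simp only [C_mul, mul_mul_mul_comm]

theorem two_mul_isoRot_isotropicTuple (a b j : Fin 4) (u : PolyTuple ℝ) :
    2 * isoRot a b (isotropicTuple u j)
      = ∑ r, ∑ s, C (frame a r * frame b s) * ∑ t, C (frame j t) * isotropic (dd s r (u t)) := by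
  calc 2 * isoRot a b (isotropicTuple u j)
      = ∑ t, C (frame j t) * (2 * isoRot a b (isotropic (u t))) := by
        simp only [isotropicTuple_apply, map_sum, ← smul_eq_C_mul,
          Derivation.map_smul, Finset.mul_sum, mul_smul_comm]
    _ = _ := by
        simp only [two_mul_isoRot_isotropic, Finset.mul_sum]
        rw [Finset.sum_comm]
        refine Finset.sum_congr rfl fun r _ => ?_
        rw [Finset.sum_comm]
        simp only [mul_left_comm]

theorem isotropicTuple_Lop (r s j : Fin 4) (u : PolyTuple ℝ) :
    isotropicTuple (Lop r s u) j = ∑ t, C (frame j t) * isotropic (dd s r (u t))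
      + (C (frame j r) * isotropic (u s) - C (frame j s) * isotropic (u r)) := by
  simp only [isotropicTuple_apply, Lop_apply, map_add, map_sub, apply_ite isotropic, map_zero,
    mul_add, mul_sub, mul_ite, mul_zero, Finset.sum_add_distrib, Finset.sum_sub_distrib,
    Finset.sum_ite_eq', Finset.mem_univ, if_true]

theorem two_smul_isoLop_isotropicTuple (a b : Fin 4) (u : PolyTuple ℝ) :
    (2 : ℂ) • isoLop a b (isotropicTuple u)
      = ∑ r, ∑ s, (frame a r * frame b s) • isotropicTuple (Lop r s u) := by
  funext j
  have ha := sum_frame_mul_frame_mul_isotropic a b j u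
  have hb := sum_frame_mul_frame_mul_isotropic b a j u
  rw [Finset.sum_comm] at hb
  simp only [mul_comm (frame b _)] at hb
  simp only [Finset.sum_apply, Pi.smul_apply, smul_eq_C_mul, isotropicTuple_Lop, mul_add, mul_sub,
    Finset.sum_add_distrib, Finset.sum_sub_distrib, ← two_mul_isoRot_isotropicTuple, ha, hb,
    isoLop_apply, map_ofNat]
  ring

theorem isoLop_mem_complexSpan {W : Submodule ℝ (PolyTuple ℝ)}
    (hW : ∀ r s : Fin 4, r < s → ∀ u ∈ W, Lop r s u ∈ W) (a b : Fin 4) {U : PolyTuple ℂ}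
    (hU : U ∈ complexSpan isotropicTuple W) : isoLop a b U ∈ complexSpan isotropicTuple W := by
  refine apply_mem_complexSpan (fun u hu => ?_) hU
  have hL (r s : Fin 4) : Lop r s u ∈ W := by
    rcases lt_trichotomy r s with h | rfl | h
    · exact hW r s h u hu
    · rw [Lop_self]
      exact W.zero_mem
    · rw [← neg_neg (Lop r s u), ← Lop_swap]
      exact W.neg_mem (hW s r h u hu)
  rw [← Submodule.smul_mem_iff _ (two_ne_zero (α := ℂ)), two_smul_isoLop_isotropicTuple]
  exact sum_mem fun r _ => sum_mem fun s _ =>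
    Submodule.smul_mem _ _ (map_mem_complexSpan (hL r s))

/-- For `s = 2` and `s = 3`, the component `s` of `𝒟` in the isotropic frame, up to the sign given
by `isotropicTuple_Dop_two` and `isotropicTuple_Dop_three`. -/
noncomputable def isoDopRow (s : Fin 4) : PolyTuple ℂ →ₗ[ℂ] MvPolynomial (Fin 4) ℂ :=
  (isoRot 0 1).toLinearMap ∘ₗ LinearMap.proj s - (isoRot 0 s).toLinearMap ∘ₗ LinearMap.proj 1
    + (isoRot 1 s).toLinearMap ∘ₗ LinearMap.proj 0

theorem isoDopRow_apply (s : Fin 4) (U : PolyTuple ℂ) :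
    isoDopRow s U = isoRot 0 1 (U s) - isoRot 0 s (U 1) + isoRot 1 s (U 0) :=
  rfl

theorem C_I_mul_C_I : (C Complex.I * C Complex.I : MvPolynomial (Fin 4) ℂ) = -1 := by
  rw [← C_mul, Complex.I_mul_I, C_neg, C_1]

theorem isotropicTuple_Dop_two (u : PolyTuple ℝ) :
    isotropicTuple (Dop u) 2 = -isoDopRow 2 (isotropicTuple u) := by
  simp only [Dop, dd, isotropicTuple_apply, frame, conjIdx, Matrix.of_apply,
    Matrix.cons_val, Fin.sum_univ_four, C_1, map_add, map_sub, map_mul, isotropic_X,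
    isoDopRow_apply, isoRot_apply, pderiv_isotropic, pderiv_C_mul, Fin.isValue, zero_mul, one_mul,
    neg_mul, zero_add, add_zero, map_neg, map_zero]
  linear_combination ((X 0 + X 1) * (isotropic (pderiv 3 (u 1)) - isotropic (pderiv 1 (u 3)))
    - (X 0 - X 1) * (isotropic (pderiv 2 (u 0)) - isotropic (pderiv 0 (u 2)))) * C_I_mul_C_I

theorem isotropicTuple_Dop_three (u : PolyTuple ℝ) :
    isotropicTuple (Dop u) 3 = isoDopRow 3 (isotropicTuple u) := by
  simp only [Dop, dd, isotropicTuple_apply, frame, conjIdx, Matrix.of_apply,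
    Matrix.cons_val, Fin.sum_univ_four, C_1, map_add, map_sub, map_mul, isotropic_X,
    isoDopRow_apply, isoRot_apply, pderiv_isotropic, pderiv_C_mul, Fin.isValue, zero_mul, one_mul,
    neg_mul, zero_add, add_zero, map_neg, map_zero]
  linear_combination ((X 0 + X 1) * (isotropic (pderiv 3 (u 1)) - isotropic (pderiv 1 (u 3)))
    + (X 0 - X 1) * (isotropic (pderiv 2 (u 0)) - isotropic (pderiv 0 (u 2)))) * C_I_mul_C_I

end IsotropicOperators

section HighestWeight

/-- The Laplacian in isotropic coordinates, up to a factor `2`. -/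
noncomputable def isoLap : Module.End ℂ (MvPolynomial (Fin 4) ℂ) :=
  ∑ a, (pderiv a).toLinearMap ∘ₗ (pderiv (conjIdx a)).toLinearMap

/-- The radial component of a tuple of isotropic components. -/
noncomputable def isoRadial : PolyTuple ℂ →ₗ[ℂ] MvPolynomial (Fin 4) ℂ :=
  ∑ a, LinearMap.mulLeft ℂ (X (conjIdx a)) ∘ₗ LinearMap.proj a

/-- The divergence of a tuple of isotropic components, up to a factor `2`. -/
noncomputable def isoDivergence : PolyTuple ℂ →ₗ[ℂ] MvPolynomial (Fin 4) ℂ :=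
  ∑ a, (pderiv a).toLinearMap ∘ₗ LinearMap.proj a

/-- The complex solutions of the equations, in isotropic coordinates, of the elements of
`Hk2Eigen k c`; of the eigenvalue equation only the components `2` and `3` are kept. -/
noncomputable def isoEigen (k : ℕ) (c : ℂ) : Submodule ℂ (PolyTuple ℂ) :=
  Submodule.pi Set.univ (fun _ => homogeneousSubmodule (Fin 4) ℂ k ⊓ LinearMap.ker isoLap)
    ⊓ (LinearMap.ker isoRadial ⊓ LinearMap.ker isoDivergence)
    ⊓ (LinearMap.ker (isoDopRow 2 + c • LinearMap.proj 2)
      ⊓ LinearMap.ker (isoDopRow 3 - c • LinearMap.proj 3))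

variable {k : ℕ} {c : ℂ} {U : PolyTuple ℂ}

theorem isoLap_apply (p : MvPolynomial (Fin 4) ℂ) :
    isoLap p = ∑ a, pderiv a (pderiv (conjIdx a) p) := by
  simp [isoLap]

theorem isoRadial_apply (U : PolyTuple ℂ) : isoRadial U = ∑ a, X (conjIdx a) * U a := by
  simp [isoRadial]

theorem isoDivergence_apply (U : PolyTuple ℂ) : isoDivergence U = ∑ a, pderiv a (U a) := by
  simp [isoDivergence]

theorem mem_isoEigen : U ∈ isoEigen k c ↔
    ((∀ a, (U a).IsHomogeneous k ∧ isoLap (U a) = 0) ∧ isoRadial U = 0 ∧ isoDivergence U = 0) ∧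
      isoDopRow 2 U + c • U 2 = 0 ∧ isoDopRow 3 U - c • U 3 = 0 := by
  simp [isoEigen, Submodule.mem_pi, and_assoc]

theorem isoLap_isotropicTuple (u : PolyTuple ℝ) (a : Fin 4) :
    isoLap (isotropicTuple u a) = 2 * ∑ r, C (frame a r) * isotropic (lap (u r)) := by
  simp only [isotropicTuple_apply, map_sum, ← smul_eq_C_mul, map_smul, isoLap_apply,
    sum_pderiv_pderiv_isotropic, Finset.mul_sum, mul_smul_comm]

theorem isotropicTuple_mem_isoEigen {c : ℝ} {u : PolyTuple ℝ} (hu : u ∈ Hk2Eigen k c) :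
    isotropicTuple u ∈ isoEigen k c := by
  obtain ⟨hu, hD⟩ := mem_Hk2Eigen.1 hu
  have hDop (a : Fin 4) : isotropicTuple (Dop u) a = (c : ℂ) • isotropicTuple u a := by
    rw [hD, map_smul, Pi.smul_apply, Complex.coe_smul]
  refine mem_isoEigen.2 ⟨⟨fun a => ⟨?_, ?_⟩, ?_, ?_⟩, ?_, ?_⟩
  · rw [isotropicTuple_apply]
    exact IsHomogeneous.sum _ _ _ fun r _ => (isHomogeneous_isotropic (hu.1 r).1).C_mul _
  · simp [isoLap_isotropicTuple, (hu.1 _).2]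
  · rw [isoRadial_apply, ← isotropic_radial, hu.2, map_zero]
  · rw [isoDivergence_apply, sum_pderiv_isotropicTuple, divergence_eq_zero hu, map_zero, mul_zero]
  · rw [← hDop, isotropicTuple_Dop_two, add_neg_cancel]
  · rw [← hDop, isotropicTuple_Dop_three, sub_self]

theorem complexSpan_le_isoEigen {c : ℝ} {W : Submodule ℝ (PolyTuple ℝ)} (hW : W ≤ Hk2Eigen k c) :
    complexSpan isotropicTuple W ≤ isoEigen k c := by
  refine Submodule.span_le.2 ?_
  rintro _ ⟨u, hu, rfl⟩
  exact isotropicTuple_mem_isoEigen (hW hu)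

/-- The grading of the isotropic coordinates for which `isoLop 0 2` and `isoLop 0 3` have degree
`-1`. -/
def coordWeight : Fin 4 → ℕ :=
  ![0, 2, 1, 1]

/-- The filtration by weight of the tuples of isotropic components. The component `j` is the
coefficient of the frame vector dual to the coordinate `conjIdx j`, whence the shift. -/
def weightLT (n : ℕ) : Set (PolyTuple ℂ) :=
  {U | ∀ j m, coeff m (U j) ≠ 0 →
    Finsupp.weight coordWeight m + coordWeight (conjIdx j) < n}

theorem weightLT_zero : weightLT 0 ⊆ {0} := fun _ hU =>
  _root_.funext fun j => MvPolynomial.ext _ _ fun m =>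
    of_not_not fun hm => Nat.not_lt_zero _ (hU j m hm)

theorem coordWeight_conjIdx_add (a : Fin 4) : coordWeight (conjIdx a) + coordWeight a = 2 := by
  decide +revert

theorem eq_two_or_eq_three_of_coordWeight_eq_one {s : Fin 4} :
    coordWeight s = 1 → s = 2 ∨ s = 3 := by
  decide +revert

theorem weight_coordWeight_le (m : Fin 4 →₀ ℕ) :
    Finsupp.weight coordWeight m ≤ 2 * Finsupp.weight (1 : Fin 4 → ℕ) m := by
  rw [Finsupp.weight_apply, Finsupp.weight_apply, Finsupp.sum, Finsupp.sum, Finset.mul_sum]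
  refine Finset.sum_le_sum fun a _ => ?_
  have ha : coordWeight a ≤ 2 := coordWeight_conjIdx_add a ▸ Nat.le_add_left _ _
  simpa [mul_comm] using Nat.mul_le_mul_left (m a) ha

theorem mem_weightLT_of_mem_isoEigen (hU : U ∈ isoEigen k c) : U ∈ weightLT (2 * k + 3) := by
  intro j m hm
  have hd : Finsupp.weight 1 m = k := ((mem_isoEigen.1 hU).1.1 j).1 hm
  have hw := weight_coordWeight_le m
  have hj := coordWeight_conjIdx_add j
  omega

theorem exists_coeff_ne_zero_of_coeff_isoRot_zero {s : Fin 4} (hs : coordWeight s = 1)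
    {p : MvPolynomial (Fin 4) ℂ} {m : Fin 4 →₀ ℕ} (h : coeff m (isoRot 0 s p) ≠ 0) :
    ∃ m', coeff m' p ≠ 0 ∧
      Finsupp.weight coordWeight m + 1 = Finsupp.weight coordWeight m' := by
  have h' : coeff m (X 0 * pderiv (conjIdx s) p) ≠ 0 ∨
      coeff m (X s * pderiv (conjIdx 0) p) ≠ 0 := by
    by_contra! hn
    exact h (by rw [isoRot_apply, coeff_sub, hn.1, hn.2, sub_zero])
  have h0 : coordWeight 0 = 0 := rfl
  have h0' := coordWeight_conjIdx_add 0
  have hs' := coordWeight_conjIdx_add s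
  rcases h' with h' | h' <;>
  · obtain ⟨m', hm', he⟩ := exists_coeff_ne_zero_of_coeff_X_mul_pderiv h'
    have hw := congrArg (Finsupp.weight coordWeight) he
    simp only [map_add, Finsupp.weight_single, one_smul] at hw
    exact ⟨m', hm', by omega⟩

theorem mapsTo_isoLop_weightLT {s : Fin 4} (hs : coordWeight s = 1) (n : ℕ) :
    Set.MapsTo (isoLop 0 s) (weightLT (n + 1)) (weightLT n) := by
  intro U hU j m hm
  have h0 : coordWeight 0 = 0 := rfl
  by_cases hrot : coeff m (isoRot 0 s (U j)) = 0
  · rw [isoLop_apply, coeff_sub, coeff_add, hrot, zero_add] at hm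
    have hcases : j = conjIdx 0 ∧ coeff m (U s) ≠ 0 ∨ j = conjIdx s ∧ coeff m (U 0) ≠ 0 := by
      by_contra! hn
      refine hm ?_
      split_ifs with h h' h' <;> simp_all
    rcases hcases with ⟨rfl, hm'⟩ | ⟨rfl, hm'⟩
    · have := hU s m hm'
      have := coordWeight_conjIdx_add s
      rw [conjIdx_conjIdx]
      omega
    · have := hU 0 m hm'
      have := coordWeight_conjIdx_add 0
      rw [conjIdx_conjIdx]
      omega
  · obtain ⟨m', hm', he⟩ := exists_coeff_ne_zero_of_coeff_isoRot_zero hs hrot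
    have := hU j m' hm'
    omega

theorem isoRot_zero_two_apply (p : MvPolynomial (Fin 4) ℂ) :
    isoRot 0 2 p = X 0 * pderiv 3 p - X 2 * pderiv 1 p :=
  rfl

theorem isoRot_zero_three_apply (p : MvPolynomial (Fin 4) ℂ) :
    isoRot 0 3 p = X 0 * pderiv 2 p - X 3 * pderiv 1 p :=
  rfl

theorem pderiv_eq_zero_of_isoRot_eq_zero {p : MvPolynomial (Fin 4) ℂ} (hlap : isoLap p = 0)
    (h₂ : isoRot 0 2 p = 0) (h₃ : isoRot 0 3 p = 0) {i : Fin 4} (hi : i ≠ 0) : pderiv i p = 0 := by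
  have hlap' : pderiv 0 (pderiv 1 p) + pderiv 2 (pderiv 3 p) = 0 := by
    have h : pderiv 0 (pderiv 1 p) + pderiv 1 (pderiv 0 p) + pderiv 2 (pderiv 3 p)
        + pderiv 3 (pderiv 2 p) = 0 := by
      rw [← hlap, isoLap_apply, Fin.sum_univ_four]
      rfl
    rw [pderiv_pderiv_comm 1 0, pderiv_pderiv_comm 3 2] at h
    refine (mul_eq_zero.1 ?_).resolve_left (two_ne_zero (α := MvPolynomial (Fin 4) ℂ))
    linear_combination h
  rw [isoRot_zero_two_apply] at h₂
  rw [isoRot_zero_three_apply] at h₃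
  have h1 : pderiv 1 p = 0 := by
    have hq : X 0 * pderiv 0 (pderiv 1 p) + X 2 * pderiv 2 (pderiv 1 p) + pderiv 1 p = 0 := by
      have h := congrArg (pderiv 2) h₂
      simp only [map_sub, pderiv_X_mul, Fin.isValue, Fin.reduceEq, if_true, if_false, map_zero] at h
      linear_combination X 0 * hlap' - h
    ext m
    have hm := congrArg (coeff m) hq
    rw [coeff_add, coeff_add, coeff_X_mul_pderiv_self, coeff_X_mul_pderiv_self, coeff_zero] at hm
    have hm' : ((m 0 + m 2 + 1 : ℕ) : ℂ) * coeff m (pderiv 1 p) = 0 := by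
      push_cast
      linear_combination hm
    exact (mul_eq_zero.1 hm').resolve_left (Nat.cast_ne_zero.2 (Nat.succ_ne_zero _))
  simp only [h1, mul_zero, sub_zero, mul_eq_zero, X_ne_zero, false_or] at h₂ h₃
  obtain rfl | rfl | rfl : i = 1 ∨ i = 2 ∨ i = 3 := by omega
  exacts [h1, h₃, h₂]

/-- The highest weight vectors in `isoEigen k c`. -/
noncomputable def highestWeightSubmodule (k : ℕ) (c : ℂ) : Submodule ℂ (PolyTuple ℂ) :=
  isoEigen k c ⊓ LinearMap.ker (isoLop 0 2) ⊓ LinearMap.ker (isoLop 0 3)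

theorem isoRot_zero_two_of_isoLop_eq_zero (hU : isoLop 0 2 U = 0) :
    isoRot 0 2 (U 0) = 0 ∧ isoRot 0 2 (U 1) + U 2 = 0 ∧ isoRot 0 2 (U 2) = 0 ∧
      isoRot 0 2 (U 3) = U 0 := by
  have h := isoLop_apply 0 2 U
  rw [hU] at h
  refine ⟨?_, ?_, ?_, ?_⟩
  · simpa [conjIdx] using (h 0).symm
  · simpa [conjIdx] using (h 1).symm
  · simpa [conjIdx] using (h 2).symm
  · simpa [conjIdx, sub_eq_zero] using (h 3).symm

theorem isoRot_zero_three_of_isoLop_eq_zero (hU : isoLop 0 3 U = 0) :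
    isoRot 0 3 (U 0) = 0 ∧ isoRot 0 3 (U 1) + U 3 = 0 ∧ isoRot 0 3 (U 2) = U 0 ∧
      isoRot 0 3 (U 3) = 0 := by
  have h := isoLop_apply 0 3 U
  rw [hU] at h
  refine ⟨?_, ?_, ?_, ?_⟩
  · simpa [conjIdx] using (h 0).symm
  · simpa [conjIdx] using (h 1).symm
  · simpa [conjIdx, sub_eq_zero] using (h 2).symm
  · simpa [conjIdx] using (h 3).symm

theorem X_mul_pderiv_zero_eq_smul {p : MvPolynomial (Fin 4) ℂ} (hp : p.IsHomogeneous k)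
    (hd : ∀ i ≠ 0, pderiv i p = 0) : X 0 * pderiv 0 p = (k : MvPolynomial (Fin 4) ℂ) * p := by
  rw [← nsmul_eq_mul, ← hp.sum_X_mul_pderiv, Fin.sum_univ_four, hd 1 (by decide),
    hd 2 (by decide), hd 3 (by decide)]
  ring

theorem apply_zero_eq_zero_of_mem_highestWeightSubmodule (hU : U ∈ highestWeightSubmodule k c) :
    U 0 = 0 := by
  obtain ⟨⟨hE, h₂⟩, h₃⟩ := hU
  obtain ⟨⟨hharm, hrad, hdiv⟩, -⟩ := mem_isoEigen.1 hE
  obtain ⟨h₂₀, -, -, h₂₃⟩ := isoRot_zero_two_of_isoLop_eq_zero h₂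
  obtain ⟨h₃₀, -, h₃₂, -⟩ := isoRot_zero_three_of_isoLop_eq_zero h₃
  have hd : ∀ i ≠ 0, pderiv i (U 0) = 0 := fun i hi =>
    pderiv_eq_zero_of_isoRot_eq_zero (hharm 0).2 h₂₀ h₃₀ hi
  have hrad' : U 0 + X 0 * pderiv 1 (U 1) + X 3 * pderiv 1 (U 2) + X 2 * pderiv 1 (U 3) = 0 := by
    have h := congrArg (pderiv 1) hrad
    simpa [isoRadial_apply, Fin.sum_univ_four, conjIdx, pderiv_X_mul, hd] using h
  have hdiv' : pderiv 0 (U 0) + pderiv 1 (U 1) + pderiv 2 (U 2) + pderiv 3 (U 3) = 0 := by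
    rw [← hdiv, isoDivergence_apply, Fin.sum_univ_four]
  rw [isoRot_zero_two_apply] at h₂₃
  rw [isoRot_zero_three_apply] at h₃₂
  have h : ((k + 1 : ℕ) : MvPolynomial (Fin 4) ℂ) * U 0 = 0 := by
    push_cast
    linear_combination X 0 * hdiv' - hrad' - h₂₃ - h₃₂
      - X_mul_pderiv_zero_eq_smul (hharm 0).1 hd
  exact (mul_eq_zero.1 h).resolve_left (Nat.cast_ne_zero.2 (Nat.succ_ne_zero k))

theorem pderiv_eq_zero_of_mem_highestWeightSubmodule (hU : U ∈ highestWeightSubmodule k c)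
    {s i : Fin 4} (hs : coordWeight s = 1) (hi : i ≠ 0) : pderiv i (U s) = 0 := by
  have h0 := apply_zero_eq_zero_of_mem_highestWeightSubmodule hU
  obtain ⟨⟨hE, h₂⟩, h₃⟩ := hU
  have hlap := ((mem_isoEigen.1 hE).1.1 s).2
  obtain ⟨-, -, h₂₂, h₂₃⟩ := isoRot_zero_two_of_isoLop_eq_zero h₂
  obtain ⟨-, -, h₃₂, h₃₃⟩ := isoRot_zero_three_of_isoLop_eq_zero h₃
  obtain rfl | rfl := eq_two_or_eq_three_of_coordWeight_eq_one hs
  exacts [pderiv_eq_zero_of_isoRot_eq_zero hlap h₂₂ (h₃₂.trans h0) hi,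
    pderiv_eq_zero_of_isoRot_eq_zero hlap (h₂₃.trans h0) h₃₃ hi]

theorem isoDopRow_eq_mul_of_mem_highestWeightSubmodule (hU : U ∈ highestWeightSubmodule k c)
    {s : Fin 4} (hs : coordWeight s = 1) :
    isoDopRow s U = ((k : MvPolynomial (Fin 4) ℂ) + 1) * U s := by
  have h0 := apply_zero_eq_zero_of_mem_highestWeightSubmodule hU
  have hd : ∀ i ≠ 0, pderiv i (U s) = 0 := fun i hi =>
    pderiv_eq_zero_of_mem_highestWeightSubmodule hU hs hi
  have hs₁ : isoRot 0 s (U 1) = -U s := by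
    obtain rfl | rfl := eq_two_or_eq_three_of_coordWeight_eq_one hs
    exacts [eq_neg_of_add_eq_zero_left (isoRot_zero_two_of_isoLop_eq_zero hU.1.2).2.1,
      eq_neg_of_add_eq_zero_left (isoRot_zero_three_of_isoLop_eq_zero hU.2).2.1]
  have hrot : isoRot 0 1 (U s) = X 0 * pderiv 0 (U s) - X 1 * pderiv 1 (U s) := rfl
  rw [isoDopRow_apply, h0, map_zero, hs₁, hrot, hd 1 (by decide),
    X_mul_pderiv_zero_eq_smul (((mem_isoEigen.1 hU.1.1).1.1 s).1) hd]
  ring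

theorem apply_two_eq_zero_or_apply_three_eq_zero (hc : c = k + 1 ∨ c = -(k + 1))
    (hU : U ∈ highestWeightSubmodule k c) : U 2 = 0 ∨ U 3 = 0 := by
  obtain ⟨-, hD₂, hD₃⟩ := mem_isoEigen.1 hU.1.1
  rw [isoDopRow_eq_mul_of_mem_highestWeightSubmodule hU rfl, smul_eq_C_mul] at hD₂ hD₃
  have h2k : 2 * ((k : MvPolynomial (Fin 4) ℂ) + 1) ≠ 0 :=
    mul_ne_zero two_ne_zero k.cast_add_one_ne_zero
  rcases hc with rfl | rfl
  · left
    simp only [map_add, map_natCast, map_one] at hD₂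
    exact (mul_eq_zero.1 (by linear_combination hD₂)).resolve_left h2k
  · right
    simp only [map_neg, map_add, map_natCast, map_one] at hD₃
    exact (mul_eq_zero.1 (by linear_combination hD₃)).resolve_left h2k

/-- Reads off a highest weight vector, whose component `2` or `3` is a multiple of `X 0 ^ k`
while the other one vanishes. -/
noncomputable def leadingCoeff (k : ℕ) : PolyTuple ℂ →ₗ[ℂ] ℂ :=
  lcoeff ℂ (Finsupp.single 0 k) ∘ₗ LinearMap.proj 2
    + lcoeff ℂ (Finsupp.single 0 k) ∘ₗ LinearMap.proj 3

theorem leadingCoeff_apply (k : ℕ) (U : PolyTuple ℂ) :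
    leadingCoeff k U = coeff (Finsupp.single 0 k) (U 2) + coeff (Finsupp.single 0 k) (U 3) :=
  rfl

theorem eq_zero_of_leadingCoeff_eq_zero (hc : c = k + 1 ∨ c = -(k + 1))
    (hU : U ∈ highestWeightSubmodule k c) (h : leadingCoeff k U = 0) : U = 0 := by
  have h0 := apply_zero_eq_zero_of_mem_highestWeightSubmodule hU
  obtain ⟨hharm, hrad, -⟩ := (mem_isoEigen.1 hU.1.1).1
  have hs {s : Fin 4} (hs : coordWeight s = 1) (hcoeff : coeff (Finsupp.single 0 k) (U s) = 0) :
      U s = 0 := by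
    rw [eq_monomial_of_pderiv_eq_zero (hharm s).1
      fun i hi => pderiv_eq_zero_of_mem_highestWeightSubmodule hU hs hi, hcoeff, monomial_zero]
  have h₂₃ : U 2 = 0 ∧ U 3 = 0 := by
    rw [leadingCoeff_apply] at h
    rcases apply_two_eq_zero_or_apply_three_eq_zero hc hU with h' | h'
    · exact ⟨h', hs rfl (by simpa [h'] using h)⟩
    · exact ⟨hs rfl (by simpa [h'] using h), h'⟩
  have h1 : U 1 = 0 := by
    simpa [isoRadial_apply, Fin.sum_univ_four, conjIdx, h0, h₂₃, X_ne_zero] using hrad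
  funext j
  obtain rfl | rfl | rfl | rfl : j = 0 ∨ j = 1 ∨ j = 2 ∨ j = 3 := by omega
  exacts [h0, h1, h₂₃.1, h₂₃.2]

theorem exists_mem_highestWeightSubmodule {c : ℝ} {W : Submodule ℝ (PolyTuple ℝ)}
    (hWE : W ≤ Hk2Eigen k c) (hW : ∀ r s : Fin 4, r < s → ∀ u ∈ W, Lop r s u ∈ W) (hne : W ≠ ⊥) :
    ∃ U ∈ complexSpan isotropicTuple W, U ≠ 0 ∧ U ∈ highestWeightSubmodule k c := by
  obtain ⟨u, hu, hu0⟩ := W.ne_bot_iff.1 hne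
  have hE := complexSpan_le_isoEigen hWE
  have hU0 : isotropicTuple u ≠ 0 := fun h =>
    hu0 (eq_zero_of_isotropicTuple_add_I_smul u 0 (by rw [h, map_zero, smul_zero, add_zero])).1
  obtain ⟨U, hU, hU0, hker⟩ := exists_ne_zero_forall_apply_eq_zero
    (f := fun s : {s : Fin 4 // coordWeight s = 1} => isoLop 0 s)
    (fun s _ hV => isoLop_mem_complexSpan hW 0 s hV) weightLT_zero
    (fun s n => mapsTo_isoLop_weightLT s.2 n) (map_mem_complexSpan hu)
    (mem_weightLT_of_mem_isoEigen (hE (map_mem_complexSpan hu))) hU0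
  exact ⟨U, hU, hU0, ⟨⟨hE hU, hker ⟨2, rfl⟩⟩, hker ⟨3, rfl⟩⟩⟩

end HighestWeight

section Irreducibility

variable {k : ℕ} {c : ℝ} {W W' : Submodule ℝ (PolyTuple ℝ)}

theorem eq_bot_or_eq_bot_of_disjoint (hc : c = k + 1 ∨ c = -(k + 1))
    (hWE : W ≤ Hk2Eigen k c) (hW : ∀ r s : Fin 4, r < s → ∀ u ∈ W, Lop r s u ∈ W)
    (hWE' : W' ≤ Hk2Eigen k c) (hW' : ∀ r s : Fin 4, r < s → ∀ u ∈ W', Lop r s u ∈ W')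
    (hd : Disjoint W W') : W = ⊥ ∨ W' = ⊥ := by
  have hc' : (c : ℂ) = k + 1 ∨ (c : ℂ) = -(k + 1) := by exact_mod_cast hc
  by_contra! hne
  obtain ⟨U, hU, hU0, hUhw⟩ := exists_mem_highestWeightSubmodule hWE hW hne.1
  obtain ⟨V, hV, hV0, hVhw⟩ := exists_mem_highestWeightSubmodule hWE' hW' hne.2
  have hprop : leadingCoeff k V • U - leadingCoeff k U • V = 0 :=
    eq_zero_of_leadingCoeff_eq_zero hc'
      (sub_mem (Submodule.smul_mem _ _ hUhw) (Submodule.smul_mem _ _ hVhw))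
      (by rw [map_sub, map_smul, map_smul, smul_eq_mul, smul_eq_mul, mul_comm, sub_self])
  have hlV : leadingCoeff k V ≠ 0 := fun h => hV0 (eq_zero_of_leadingCoeff_eq_zero hc' hVhw h)
  have hdC := disjoint_complexSpan eq_zero_of_isotropicTuple_add_I_smul hd
  refine hU0 (Submodule.disjoint_def.1 hdC U hU ?_)
  rw [← Submodule.smul_mem_iff _ hlV, sub_eq_zero.1 hprop]
  exact Submodule.smul_mem _ _ hV

theorem Lop_mem_orthogonal_tupleForm (hW : ∀ r s : Fin 4, r < s → ∀ u ∈ W, Lop r s u ∈ W)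
    {r s : Fin 4} (hrs : r < s) {u : PolyTuple ℝ} (hu : u ∈ tupleForm.orthogonal W) :
    Lop r s u ∈ tupleForm.orthogonal W := fun w hw => by
  have h := tupleForm_Lop r s w u
  rw [hu _ (hW r s hrs w hw)] at h
  exact neg_eq_zero.1 h.symm

theorem eq_bot_or_eq_Hk2Eigen (hc : c = k + 1 ∨ c = -(k + 1)) (hWE : W ≤ Hk2Eigen k c)
    (hW : ∀ r s : Fin 4, r < s → ∀ u ∈ W, Lop r s u ∈ W) : W = ⊥ ∨ W = Hk2Eigen k c := by
  have hd : Disjoint W (tupleForm.orthogonal W ⊓ Hk2Eigen k c) :=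
    Submodule.disjoint_def.2 fun u hu hu' => tupleForm_self_eq_zero.1 (hu'.1 u hu)
  refine (eq_bot_or_eq_bot_of_disjoint hc hWE hW inf_le_right (fun r s hrs u hu =>
    ⟨Lop_mem_orthogonal_tupleForm hW hrs hu.1, Lop_mem_Hk2Eigen hu.2 r s⟩) hd).imp_right
    fun h => ?_
  have : FiniteDimensional ℝ W := Submodule.finiteDimensional_of_le hWE
  calc W = W ⊔ tupleForm.orthogonal W ⊓ Hk2Eigen k c := by rw [h, sup_bot_eq]
    _ = (W ⊔ tupleForm.orthogonal W) ⊓ Hk2Eigen k c := (sup_inf_assoc_of_le _ hWE).symm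
    _ = Hk2Eigen k c := by
      rw [sup_orthogonal_eq_top isSymm_tupleForm (nondegenerate_restrict_tupleForm W), top_inf_eq]

end Irreducibility

/-- for `n = 4` and `k ≥ 1`, `Ĥ_{k,2} = Ĥ_{k,2+} ⊕ Ĥ_{k,2−}` (unique
decomposition), and each of `Ĥ_{k,2+}`, `Ĥ_{k,2−}` is `L_{r,s}`-invariant with no
`L_{r,s}`-invariant ℝ-subspaces other than `{0}` and itself. -/
theorem Hk2_splits_irreducible (k : ℕ) (hk : 1 ≤ k) :
    (∀ u ∈ Hk2Set k,
      ∃! p : (Fin 4 → MvPolynomial (Fin 4) ℝ) × (Fin 4 → MvPolynomial (Fin 4) ℝ),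
        p.1 ∈ Hk2Plus k ∧ p.2 ∈ Hk2Minus k ∧ u = p.1 + p.2) ∧
    (∀ r s : Fin 4, r < s → ∀ u ∈ Hk2Plus k, Lop r s u ∈ Hk2Plus k) ∧
    (∀ r s : Fin 4, r < s → ∀ u ∈ Hk2Minus k, Lop r s u ∈ Hk2Minus k) ∧
    (∀ W : Submodule ℝ (Fin 4 → MvPolynomial (Fin 4) ℝ),
      (W : Set (Fin 4 → MvPolynomial (Fin 4) ℝ)) ⊆ Hk2Plus k →
      (∀ r s : Fin 4, r < s → ∀ u ∈ W, Lop r s u ∈ W) →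
      (W : Set (Fin 4 → MvPolynomial (Fin 4) ℝ)) = {0} ∨
        (W : Set (Fin 4 → MvPolynomial (Fin 4) ℝ)) = Hk2Plus k) ∧
    (∀ W : Submodule ℝ (Fin 4 → MvPolynomial (Fin 4) ℝ),
      (W : Set (Fin 4 → MvPolynomial (Fin 4) ℝ)) ⊆ Hk2Minus k →
      (∀ r s : Fin 4, r < s → ∀ u ∈ W, Lop r s u ∈ W) →
      (W : Set (Fin 4 → MvPolynomial (Fin 4) ℝ)) = {0} ∨
        (W : Set (Fin 4 → MvPolynomial (Fin 4) ℝ)) = Hk2Minus k) := by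
  rw [← coe_Hk2Eigen_plus, ← coe_Hk2Eigen_minus]
  refine ⟨fun u hu => ?_, fun r s _ u hu => Lop_mem_Hk2Eigen hu r s,
    fun r s _ u hu => Lop_mem_Hk2Eigen hu r s, fun W hWE hW => ?_, fun W hWE hW => ?_⟩
  · exact existsUnique_add_mem_inf_eigenspace (T := DopLinear) (N := Hk2 k) (a := (k : ℝ) + 1)
      (fun _ => Dop_mem_Hk2) k.cast_add_one_ne_zero
      (fun _ hv => Dop_Dop (mem_Hk2_iff_mem_Hk2Set.1 hv)) (mem_Hk2_iff_mem_Hk2Set.2 hu)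
  · exact (eq_bot_or_eq_Hk2Eigen (Or.inl rfl) hWE hW).imp (congrArg _) (congrArg _)
  · exact (eq_bot_or_eq_Hk2Eigen (Or.inr rfl) hWE hW).imp (congrArg _) (congrArg _)
end

section
/- For n = 4, the operator 𝒟 commutes with the o(4,ℝ)-action on 4-tuples of polynomials: for all 1 ≤ r < s ≤ 4 and every 4-tuple u of polynomials in ℝ[x₁,x₂,x₃,x₄], 𝒟(L_{r,s}(u)) = L_{r,s}(𝒟(u)). -/
open MvPolynomial

/-! With `ε` the Levi-Civita symbol, `(𝒟 u)_j = ∑ ε_{jmkl} x_l ∂_k u_m`. A skew matrix `A` rotates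
the coordinates `x_l` and the gradient `∂_k` by the same rule as the components `u_m`, so `𝒟`
commutes with `A` as soon as the tensor `ε` does; and `A` acts on `ε`, a determinant, as
multiplication by its trace, which vanishes. -/

open Matrix

section LinearVectorField

theorem sum_derivation_apply {R A M κ : Type*} [CommSemiring R] [CommSemiring A] [Algebra R A]
    [AddCommMonoid M] [Module A M] [Module R M] (t : Finset κ) (D : κ → Derivation R A M) (a : A) :
    (∑ i ∈ t, D i) a = ∑ i ∈ t, D i a := by
  rw [← Derivation.coeFnAddMonoidHom_apply, map_sum, Finset.sum_apply]
  rfl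

variable {ι R : Type*} [Fintype ι] [CommRing R]

/-- The linear vector field `∑ A i j x_i ∂_j` attached to a matrix `A`, as a derivation. For
`A = single r s 1 - single s r 1` it is the rotation `x_r ∂_s - x_s ∂_r`. -/
noncomputable def linearVectorField (A : Matrix ι ι R) :
    Derivation R (MvPolynomial ι R) (MvPolynomial ι R) :=
  mkDerivation R fun j => ∑ i, A i j • X i

theorem linearVectorField_X (A : Matrix ι ι R) (j : ι) :
    linearVectorField A (X j) = ∑ i, A i j • X i :=
  mkDerivation_X R _ j

theorem commutator_pderiv_linearVectorField (A : Matrix ι ι R) (k : ι) :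
    ⁅(pderiv k : Derivation R (MvPolynomial ι R) (MvPolynomial ι R)), linearVectorField A⁆ =
      ∑ i, A k i • pderiv i := by
  classical
  refine derivation_ext fun l => ?_
  rw [Derivation.commutator_apply]
  simp [linearVectorField_X, pderiv_X, Pi.single_apply, sum_derivation_apply, apply_ite]

theorem pderiv_linearVectorField (A : Matrix ι ι R) (k : ι) (p : MvPolynomial ι R) :
    pderiv k (linearVectorField A p) =
      linearVectorField A (pderiv k p) + ∑ i, A k i • pderiv i p := by
  rw [← sub_eq_iff_eq_add', ← Derivation.commutator_apply, commutator_pderiv_linearVectorField,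
    sum_derivation_apply]
  rfl

theorem linearVectorField_X_mul {A : Matrix ι ι R} (hA : Aᵀ = -A) (l : ι) (p : MvPolynomial ι R) :
    linearVectorField A (X l * p) = X l * linearVectorField A p - ∑ i, A l i • (X i * p) := by
  have skew (i : ι) : A i l = -A l i := congrFun₂ hA l i
  rw [Derivation.leibniz, linearVectorField_X, smul_eq_mul, smul_eq_mul, mul_comm p, Finset.sum_mul]
  simp only [skew, neg_smul, neg_mul, smul_mul_assoc, Finset.sum_neg_distrib, sub_eq_add_neg]

/-- The action of a matrix `A` on tuples of polynomials: differentiate each component along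
`linearVectorField A` and add the product of `A` with the tuple. -/
noncomputable def tupleAction (A : Matrix ι ι R) (u : ι → MvPolynomial ι R) :
    ι → MvPolynomial ι R :=
  fun j => linearVectorField A (u j) + ∑ i, A j i • u i

theorem X_mul_pderiv_tupleAction {A : Matrix ι ι R} (hA : Aᵀ = -A) (u : ι → MvPolynomial ι R)
    (m k l : ι) :
    X l * pderiv k (tupleAction A u m) =
      linearVectorField A (X l * pderiv k (u m)) +
        (∑ i, A m i • (X l * pderiv k (u i)) + ∑ i, A k i • (X l * pderiv i (u m)) +
          ∑ i, A l i • (X i * pderiv k (u m))) := by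
  simp only [tupleAction, linearVectorField_X_mul hA, pderiv_linearVectorField, map_add, map_sum,
    Derivation.map_smul, mul_add, Finset.mul_sum, mul_smul_comm]
  abel

end LinearVectorField

section Tensor

variable {ι R M : Type*} [Fintype ι] [CommRing R] [AddCommGroup M] [Module R M]

/-- The tensor `T`, read as the trilinear map `(a, b, c) ↦ ∑ T j m k l a_m b_k c_l`, commutes with
`A` acting on its arguments by the product rule. -/
def IsEquivariant (A : Matrix ι ι R) (T : ι → ι → ι → ι → R) : Prop :=
  ∀ j m k l, ∑ i, A j i * T i m k l =
    ∑ i, T j i k l * A i m + ∑ i, T j m i l * A i k + ∑ i, T j m k i * A i l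

theorem sum_smul_sum_smul (A : Matrix ι ι R) (t : ι → R) (a : ι → M) :
    ∑ m, t m • ∑ i, A m i • a i = ∑ m, (∑ i, t i * A i m) • a m := by
  simp only [Finset.smul_sum, Finset.sum_smul, smul_smul]
  exact Finset.sum_comm

theorem IsEquivariant.sum_smul {A : Matrix ι ι R} {T : ι → ι → ι → ι → R}
    (hT : IsEquivariant A T) (w : ι → ι → ι → M) (j : ι) :
    ∑ m, ∑ k, ∑ l, T j m k l •
        (∑ i, A m i • w i k l + ∑ i, A k i • w m i l + ∑ i, A l i • w m k i) =
      ∑ i, A j i • ∑ m, ∑ k, ∑ l, T i m k l • w m k l := by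
  have rotate (f : ι → ι → ι → M) : ∑ m, ∑ k, ∑ l, f m k l = ∑ k, ∑ l, ∑ m, f m k l :=
    Finset.sum_comm.trans (Finset.sum_congr rfl fun _ _ => Finset.sum_comm)
  have first_index : ∑ m, ∑ k, ∑ l, T j m k l • ∑ i, A m i • w i k l =
      ∑ m, ∑ k, ∑ l, (∑ i, T j i k l * A i m) • w m k l := by
    rw [rotate, rotate fun m k l => (∑ i, T j i k l * A i m) • w m k l]
    simp only [fun k l => sum_smul_sum_smul A (fun m => T j m k l) (fun m => w m k l)]
  have second_index : ∑ m, ∑ k, ∑ l, T j m k l • ∑ i, A k i • w m i l =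
      ∑ m, ∑ k, ∑ l, (∑ i, T j m i l * A i k) • w m k l := by
    refine Finset.sum_congr rfl fun m _ => ?_
    rw [Finset.sum_comm, Finset.sum_comm (f := fun k l => (∑ i, T j m i l * A i k) • w m k l)]
    simp only [fun l => sum_smul_sum_smul A (fun k => T j m k l) (fun k => w m k l)]
  have third_index : ∑ m, ∑ k, ∑ l, T j m k l • ∑ i, A l i • w m k i =
      ∑ m, ∑ k, ∑ l, (∑ i, T j m k i * A i l) • w m k l := by
    simp only [sum_smul_sum_smul]
  have output_index : ∑ i, A j i • ∑ m, ∑ k, ∑ l, T i m k l • w m k l =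
      ∑ m, ∑ k, ∑ l, (∑ i, A j i * T i m k l) • w m k l := by
    simp only [Finset.smul_sum, Finset.sum_smul, smul_smul]
    rw [Finset.sum_comm]
    exact Finset.sum_congr rfl fun m _ => rotate fun i k l => (A j i * T i m k l) • w m k l
  rw [output_index]
  simp only [smul_add, Finset.sum_add_distrib, first_index, second_index, third_index, hT j,
    add_smul]

/-- The first-order operator `u ↦ (∑ T j m k l x_l ∂_k u_m)_j`; for the Levi-Civita tensor it is the
operator `𝒟`. -/
noncomputable def tensorCurl (T : ι → ι → ι → ι → R) (u : ι → MvPolynomial ι R) :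
    ι → MvPolynomial ι R :=
  fun j => ∑ m, ∑ k, ∑ l, T j m k l • (X l * pderiv k (u m))

theorem tensorCurl_tupleAction {A : Matrix ι ι R} (hA : Aᵀ = -A) {T : ι → ι → ι → ι → R}
    (hT : IsEquivariant A T) (u : ι → MvPolynomial ι R) :
    tensorCurl T (tupleAction A u) = tupleAction A (tensorCurl T u) := by
  ext1 j
  simp only [tensorCurl, X_mul_pderiv_tupleAction hA, smul_add _ (linearVectorField A _),
    Finset.sum_add_distrib, hT.sum_smul (fun m k l => X l * pderiv k (u m)) j]
  simp only [tupleAction, tensorCurl, map_sum, Derivation.map_smul]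

end Tensor

section LeviCivita

variable {ι R : Type*} [Fintype ι] [DecidableEq ι] [CommRing R]

theorem sum_det_updateRow_mul (M A : Matrix ι ι R) :
    ∑ i, (M.updateRow i ((M * A) i)).det = A.trace * M.det := by
  have cofactor_expansion (i : ι) :
      (M.updateRow i ((M * A) i)).det = (M * A * M.adjugate) i i := by
    rw [← cramer_transpose_apply, cramer_eq_adjugate_mulVec, ← adjugate_transpose, mulVec_transpose]
    rfl
  calc ∑ i, (M.updateRow i ((M * A) i)).det
    _ = (M * A * M.adjugate).trace := Finset.sum_congr rfl fun i _ => cofactor_expansion i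
    _ = (M.adjugate * M * A).trace := by rw [trace_mul_comm, Matrix.mul_assoc]
    _ = A.trace * M.det := by
      rw [adjugate_mul, smul_mul, Matrix.one_mul, trace_smul, smul_eq_mul, mul_comm]

variable (R) in
/-- The Levi-Civita symbol: the sign of `v` when `v` is a permutation, and zero otherwise. It is
encoded as the determinant of the matrix whose rows are the standard basis vectors `e_{v i}`. -/
def leviCivita (v : ι → ι) : R :=
  ((1 : Matrix ι ι R).submatrix v id).det

theorem sum_mul_leviCivita_update (A : Matrix ι ι R) (v : ι → ι) :
    ∑ a, ∑ i, A (v a) i * leviCivita R (Function.update v a i) = A.trace * leviCivita R v := by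
  rw [leviCivita, ← sum_det_updateRow_mul]
  refine Finset.sum_congr rfl fun a _ => ?_
  have row_eq : ((1 : Matrix ι ι R).submatrix v id * A) a = ∑ i, A (v a) i • Pi.single i 1 := by
    ext b
    simp [Matrix.mul_apply, Matrix.one_apply, Pi.single_apply]
  have updateRow_single (i : ι) :
      ((1 : Matrix ι ι R).submatrix v id).updateRow a (Pi.single i 1) =
        (1 : Matrix ι ι R).submatrix (Function.update v a i) id := by
    ext b c
    by_cases h : b = a <;> simp [h, updateRow_apply, Pi.single_apply, Matrix.one_apply, eq_comm]
  rw [← cramer_transpose_apply, row_eq, map_sum, Finset.sum_apply]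
  simp only [cramer_transpose_apply, det_updateRow_smul, updateRow_single, leviCivita]

theorem isEquivariant_leviCivita {A : Matrix (Fin 4) (Fin 4) R} (hA : Aᵀ = -A)
    (htr : A.trace = 0) : IsEquivariant A fun j m k l => leviCivita R ![j, m, k, l] := by
  intro j m k l
  have invariance := sum_mul_leviCivita_update A ![j, m, k, l]
  have update_vec (i : Fin 4) : Function.update ![j, m, k, l] 0 i = ![i, m, k, l] ∧
      Function.update ![j, m, k, l] 1 i = ![j, i, k, l] ∧
      Function.update ![j, m, k, l] 2 i = ![j, m, i, l] ∧
      Function.update ![j, m, k, l] 3 i = ![j, m, k, i] := by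
    simp [funext_iff, Fin.forall_fin_succ, Function.update_apply]
  have skew (t : Fin 4 → R) (a : Fin 4) : ∑ i, t i * A i a = -∑ i, A a i * t i := by
    rw [← Finset.sum_neg_distrib]
    refine Finset.sum_congr rfl fun i _ => ?_
    rw [show A i a = -A a i from congrFun₂ hA a i, mul_neg, mul_comm]
  rw [htr, zero_mul, Fin.sum_univ_four] at invariance
  simp only [update_vec, cons_val] at invariance
  simp only [skew]
  linear_combination invariance

theorem leviCivita_perm (σ : Equiv.Perm ι) : leviCivita R σ = (Equiv.Perm.sign σ : R) := by
  rw [leviCivita, det_permute, det_one, mul_one]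

theorem leviCivita_eq_zero {v : ι → ι} {i j : ι} (hij : i ≠ j) (h : v i = v j) :
    leviCivita R v = 0 :=
  det_zero_of_row_eq hij (by simp [funext_iff, Matrix.one_apply, h])

theorem leviCivita_eq_prod_ite {n : ℕ} (v : Fin n → Fin n) :
    leviCivita R v =
      ∏ i, ∏ j ∈ Finset.Ioi i, if v i < v j then 1 else if v i = v j then 0 else -1 := by
  by_cases hv : Function.Injective v
  · obtain ⟨σ, rfl⟩ : ∃ σ : Equiv.Perm (Fin n), σ = v :=
      ⟨Equiv.ofBijective v (Finite.injective_iff_bijective.mp hv), rfl⟩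
    rw [leviCivita_perm, Equiv.Perm.sign_eq_prod_prod_Ioi]
    push_cast
    refine Finset.prod_congr rfl fun i _ => Finset.prod_congr rfl fun j hij => ?_
    have ne : σ i ≠ σ j := σ.injective.ne (Finset.mem_Ioi.mp hij).ne
    split_ifs <;> simp
  · obtain ⟨i, j, h, lt⟩ : ∃ i j, v i = v j ∧ i < j := by
      obtain ⟨i, j, h, ne⟩ := Function.not_injective_iff.mp hv
      rcases ne.lt_or_gt with lt | gt
      exacts [⟨i, j, h, lt⟩, ⟨j, i, h.symm, gt⟩]
    rw [leviCivita_eq_zero lt.ne h]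
    refine (Finset.prod_eq_zero (Finset.mem_univ i) ?_).symm
    exact Finset.prod_eq_zero (Finset.mem_Ioi.mpr lt) (by simp [h])

end LeviCivita

/-- The operator `𝒟` in Levi-Civita form, over an arbitrary commutative ring. -/
noncomputable def leviCivitaCurl {R : Type*} [CommRing R] :
    (Fin 4 → MvPolynomial (Fin 4) R) → Fin 4 → MvPolynomial (Fin 4) R :=
  tensorCurl fun j m k l => leviCivita R ![j, m, k, l]

theorem Dop_eq_leviCivitaCurl (u : Fin 4 → MvPolynomial (Fin 4) ℝ) :
    Dop u = leviCivitaCurl u := by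
  ext1 j
  fin_cases j <;>
  · simp [Dop, dd, leviCivitaCurl, tensorCurl, leviCivita_eq_prod_ite, Fin.sum_univ_four,
      Fin.prod_univ_succ, Fin.prod_Ioi_succ]
    ring

theorem linearVectorField_single_sub_single {ι R : Type*} [Fintype ι] [DecidableEq ι] [CommRing R]
    (r s : ι) :
    linearVectorField (single r s (1 : R) - single s r 1) =
      (X r : MvPolynomial ι R) • pderiv s - (X s : MvPolynomial ι R) • pderiv r := by
  refine derivation_ext fun j => ?_
  rw [linearVectorField_X, Derivation.sub_apply, Derivation.smul_apply, Derivation.smul_apply]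
  simp [single_apply, pderiv_X, Pi.single_apply, sub_smul, ite_and, eq_comm]

theorem Lop_eq_tupleAction (r s : Fin 4) (u : Fin 4 → MvPolynomial (Fin 4) ℝ) :
    Lop r s u = tupleAction (single r s 1 - single s r 1) u := by
  ext1 j
  simp only [Lop, eq_comm, tupleAction, linearVectorField_single_sub_single, Derivation.coe_sub,
    Derivation.coe_smul, Pi.sub_apply, Pi.smul_apply, smul_eq_mul, Matrix.sub_apply, single_apply,
    ite_and, sub_smul, ite_smul, one_smul, zero_smul, Finset.sum_sub_distrib,
    Finset.sum_ite_irrel, Finset.sum_ite_eq, Finset.mem_univ, ↓reduceIte, Finset.sum_const_zero]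
  abel

theorem Dop_commutes_Lop_general {R : Type*} [CommRing R] {A : Matrix (Fin 4) (Fin 4) R}
    (hA : Aᵀ = -A) (htr : A.trace = 0) (u : Fin 4 → MvPolynomial (Fin 4) R) :
    leviCivitaCurl (tupleAction A u) = tupleAction A (leviCivitaCurl u) :=
  tensorCurl_tupleAction hA (isEquivariant_leviCivita hA htr) u

/-- `𝒟` commutes with the `o(4,ℝ)`-action: for all `r < s` and every
`4`-tuple `u` of polynomials, `𝒟(L_{r,s}(u)) = L_{r,s}(𝒟(u))`. -/
theorem Dop_commutes_Lop (r s : Fin 4) (hrs : r < s)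
    (u : Fin 4 → MvPolynomial (Fin 4) ℝ) :
    Dop (Lop r s u) = Lop r s (Dop u) := by
  simpa only [Dop_eq_leviCivitaCurl, Lop_eq_tupleAction] using
    Dop_commutes_Lop_general (by simp) (by simp [trace_single_eq_of_ne, hrs.ne, hrs.ne']) u
end
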